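/- arXiv:1003.4722 — 3 statements merged into one kernel-verified Lean document; each statement's English description precedes it below -/
import Mathlib

section
/- Let G be a finite group, M, N normal subgroups of G, and p a prime with Sylow p-subgroup S_p, such that M ∩ S_p ≤ Φ(S_p)N. Then O^p(MN/N), the smallest normal subgroup of MN/N with p-group quotient, is a p'-group. -/
/-- `O^p(H)`: the smallest normal subgroup of `H` whose quotient is a `p`-group. -/
def pResidual (p : ℕ) (H : Type*) [Group H] : Subgroup H :=
  ⨅ K ∈ {K : Subgroup H | K.Normal ∧ ∀ h : H, ∃ n : ℕ, h ^ p ^ n ∈ K}, K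

open Subgroup in
/-- The transfer argument at the heart of Tate's theorem. -/
theorem tate_transfer {G B : Type*} [Group G] [Finite G] [Group B] [Finite B] {p : ℕ}
    [Fact p.Prime] (P : Sylow p G) (s : Set G) (hs : ∀ x ∈ s, (orderOf x).Coprime p)
    [(closure s).Normal] (A : Subgroup B) (hAc : A ≤ center B) (hB : IsPGroup p B)
    (π : P →* B) (hπ : ∀ u : P, (u : G) ∈ closure s → π u ∈ A) :
    ∃ (β : P →* A) (m : ℕ), p.Coprime m ∧
      ∀ u : P, (u : G) ∈ closure s → (β u : B) = π u ^ m := by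
  classical
  set N := closure s with hNdef
  let I : CommGroup A :=
    { (inferInstance : Group A) with
      mul_comm := fun a b => Subtype.ext ((mem_center_iff.mp (hAc b.2)) a) }
  let E : Subgroup (G × B) :=
    { carrier := {q | ∃ y : P, q.1⁻¹ * (y : G) ∈ N ∧ π y = q.2}
      one_mem' := ⟨1, by simp [N.one_mem], by simp⟩
      mul_mem' := by
        rintro ⟨g, b⟩ ⟨g', b'⟩ ⟨y, hy, rfl⟩ ⟨y', hy', rfl⟩
        refine ⟨y * y', ?_, by simp⟩
        have h1 : (y' : G)⁻¹ * (g⁻¹ * (y : G)) * (y' : G)⁻¹⁻¹ ∈ N :=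
          ‹N.Normal›.conj_mem _ hy _
        have := N.mul_mem hy' h1
        simpa [mul_assoc] using this
      inv_mem' := by
        rintro ⟨g, b⟩ ⟨y, hy, rfl⟩
        refine ⟨y⁻¹, ?_, by simp⟩
        have h1 : g * (g⁻¹ * (y : G))⁻¹ * g⁻¹ ∈ N :=
          ‹N.Normal›.conj_mem _ (N.inv_mem hy) _
        simpa [mul_assoc] using h1 }
  let f : E →* G := (MonoidHom.fst G B).comp E.subtype
  let P' : Subgroup E := (P : Subgroup G).comap f
  have hPr : (P : Subgroup G) ≤ f.range := by
    intro x hx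
    exact ⟨⟨(x, π ⟨x, hx⟩), ⟨⟨x, hx⟩, by simp [N.one_mem], rfl⟩⟩, rfl⟩
  have hidx : p.Coprime P'.index := by
    rw [Subgroup.index_comap]
    refine ((Nat.Prime.coprime_iff_not_dvd Fact.out).mpr P.not_dvd_index).coprime_dvd_right ?_
    exact relIndex_dvd_index_of_le hPr
  let r : P' →* P :=
    { toFun := fun q => ⟨f q.1, q.2⟩
      map_one' := rfl
      map_mul' := fun _ _ => rfl }
  let t : P' →* B := (MonoidHom.snd G B).comp (E.subtype.comp P'.subtype)
  have hτ : ∀ q : P', (π (r q))⁻¹ * t q ∈ A := by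
    intro q
    obtain ⟨y, hy, hb⟩ := q.1.2
    have h2 := hπ ((r q)⁻¹ * y) hy
    rw [map_mul, map_inv, hb] at h2
    exact h2
  let τ : P' →* A :=
    { toFun := fun q => ⟨(π (r q))⁻¹ * t q, hτ q⟩
      map_one' := by
        apply Subtype.ext
        change (π (r 1))⁻¹ * t 1 = 1
        simp only [map_one, inv_one, mul_one]
      map_mul' := by
        intro q q'
        apply Subtype.ext
        change (π (r (q * q')))⁻¹ * t (q * q') = ((π (r q))⁻¹ * t q) * ((π (r q'))⁻¹ * t q')
        have h3 := mem_center_iff.mp (hAc (hτ q)) (π (r q'))⁻¹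
        rw [← mul_assoc _ _ (t q'), ← h3]
        simp only [map_mul, mul_inv_rev, mul_assoc] }
  let V : E →* A := MonoidHom.transfer τ
  let δ : P →* E :=
    { toFun := fun x => ⟨((x : G), π x), ⟨x, by simp [N.one_mem], rfl⟩⟩
      map_one' := by apply Subtype.ext; simp
      map_mul' := by intro x y; apply Subtype.ext; simp }
  let ν : N →* E :=
    { toFun := fun n => ⟨((n : G), 1), ⟨1, by simp, by simp⟩⟩
      map_one' := rfl
      map_mul' := by intro x y; apply Subtype.ext; simp }
  have hAp : IsPGroup p A := hB.to_subgroup A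
  have hV1 : ∀ n : N, V (ν n) = 1 := by
    rintro ⟨n, hn⟩
    induction hn using closure_induction with
    | mem x hx =>
      have h1 : V (ν ⟨x, subset_closure hx⟩) ^ orderOf x = 1 := by
        rw [← map_pow, ← map_pow]
        have : (⟨x, subset_closure hx⟩ : N) ^ orderOf x = 1 :=
          Subtype.ext (by simp [pow_orderOf_eq_one])
        rw [this, map_one, map_one]
      obtain ⟨k, hk⟩ := hAp (V (ν ⟨x, subset_closure hx⟩))
      have h3 := Nat.dvd_gcd (orderOf_dvd_of_pow_eq_one h1) (orderOf_dvd_of_pow_eq_one hk)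
      rw [Nat.Coprime.gcd_eq_one ((hs x hx).pow_right k)] at h3
      exact orderOf_eq_one_iff.mp (Nat.dvd_one.mp h3)
    | one => exact (map_one (V.comp ν))
    | mul x y hx hy h1 h2 =>
      have := map_mul (V.comp ν) ⟨x, hx⟩ ⟨y, hy⟩
      simp only [MonoidHom.comp_apply, h1, h2, mul_one] at this
      exact this
    | inv x hx h1 =>
      have := map_inv (V.comp ν) ⟨x, hx⟩
      simp only [MonoidHom.comp_apply, h1, inv_one] at this
      exact this
  refine ⟨V.comp δ, P'.index, hidx, ?_⟩
  intro u hu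
  let e : E := ⟨(1, π u), ⟨u, by simpa using hu, rfl⟩⟩
  have he : ∀ g₀ : E, g₀ * e = e * g₀ := by
    intro g₀
    apply Subtype.ext
    apply Prod.ext
    · change g₀.1.1 * 1 = 1 * g₀.1.1
      simp
    · exact mem_center_iff.mp (hAc (hπ u hu)) _
  have hVe := MonoidHom.transfer_eq_pow τ e (by
    intro k g₀ _
    have : Commute g₀ (e ^ k) := Commute.pow_right (he g₀) k
    rw [mul_assoc, ← this.eq, inv_mul_cancel_left])
  have hsplit : δ u = ν ⟨u, hu⟩ * e := by
    apply Subtype.ext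
    apply Prod.ext
    · change (u : G) = u * 1
      simp
    · change π u = 1 * π u
      simp
  have hfin : V (δ u) = V e := by
    rw [hsplit, map_mul, hV1, one_mul]
  change ((V (δ u) : A) : B) = _
  rw [hfin]
  change ((MonoidHom.transfer τ e : A) : B) = _
  rw [hVe]
  generalize_proofs hmem
  change (π (r ⟨e ^ P'.index, hmem⟩))⁻¹ * t ⟨e ^ P'.index, hmem⟩ = _
  have h1 : r ⟨e ^ P'.index, hmem⟩ = 1 := by
    apply Subtype.ext
    change f (e ^ P'.index) = 1
    rw [map_pow]
    change (1 : G) ^ _ = 1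
    simp
  have h2 : t ⟨e ^ P'.index, hmem⟩ = π u ^ P'.index := rfl
  rw [h1, h2, map_one, inv_one, one_mul]

open Subgroup in
theorem tate_aux {G : Type*} [Group G] [Finite G] {p : ℕ}
    [Fact p.Prime] (P : Sylow p G) (s : Set G) (hs : ∀ x ∈ s, (orderOf x).Coprime p)
    [(closure s).Normal] (h : (closure s).subgroupOf P ≤ frattini P) :
    (closure s).subgroupOf P = ⊥ := by
  by_contra hne
  set Q := (closure s).subgroupOf (P : Subgroup G) with hQ
  have hnil : Group.IsNilpotent P := P.isPGroup'.isNilpotent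
  set R : Subgroup P := ⁅Q, ⊤⁆ with hR
  have hRQ : R ≤ Q := commutator_le_left Q ⊤
  have hQR : ¬ Q ≤ R := by
    intro hle
    obtain ⟨n, hn⟩ := Subgroup.nilpotent_iff_lowerCentralSeries.mp hnil
    have : ∀ k, Q ≤ (⊤ : Subgroup P).lowerCentralSeries k := by
      intro k
      induction k with
      | zero => exact le_top
      | succ k ih => exact hle.trans (commutator_mono ih le_rfl)
    exact hne (le_bot_iff.mp (hn ▸ this n))
  let π := QuotientGroup.mk' R
  let A : Subgroup (P ⧸ R) := Q.map π
  have hAc : A ≤ center (P ⧸ R) := by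
    rintro _ ⟨q, hq, rfl⟩
    rw [mem_center_iff]
    intro b
    obtain ⟨b, rfl⟩ := QuotientGroup.mk'_surjective R b
    rw [← map_mul, ← map_mul]
    refine (QuotientGroup.eq.mpr ?_)
    have := commutator_mem_commutator (Q.inv_mem hq) (mem_top b⁻¹)
    simpa [commutatorElement_def, mul_assoc] using this
  have hB : IsPGroup p (P ⧸ R) := P.isPGroup'.to_quotient R
  obtain ⟨β, m, hm, hβ⟩ := tate_transfer P s hs A hAc hB π (fun u hu => ⟨u, hu, rfl⟩)
  have hAp : IsPGroup p A := hB.to_subgroup A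
  have hsurj : ∀ a : A, ∃ q ∈ Q, β q = a := by
    intro a
    obtain ⟨c, hc⟩ := (hAp.powEquiv hm).surjective a
    obtain ⟨q, hq, hqc⟩ := c.2
    refine ⟨q, hq, Subtype.ext ?_⟩
    rw [hβ q hq, hqc, ← hc]
    rfl
  have hfr := frattini_le_comap_frattini_of_surjective (φ := β)
    (fun a => (hsurj a).imp fun _ h => h.2)
  have htop : frattini A = ⊤ := by
    rw [eq_top_iff]
    rintro a -
    obtain ⟨q, hq, rfl⟩ := hsurj a
    exact hfr (h hq)
  have hbt : (⊥ : Subgroup A) = ⊤ := frattini_nongenerating (by rw [htop, bot_sup_eq])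
  apply hQR
  intro q hq
  have h1 : (⟨π q, ⟨q, hq, rfl⟩⟩ : A) ∈ (⊥ : Subgroup A) := hbt ▸ mem_top _
  have h2 : π q = 1 := congrArg Subtype.val (mem_bot.mp h1)
  exact (QuotientGroup.eq_one_iff q).mp h2

open Subgroup in
theorem sylow_not_dvd_relIndex {G : Type*} [Group G] [Finite G] {p : ℕ}
    [Fact p.Prime] (P : Sylow p G) (K : Subgroup G) [K.Normal] :
    ¬ p ∣ (P : Subgroup G).relIndex K := by
  have h1 : ¬ p ∣ (P : Subgroup G).relIndex ((P : Subgroup G) ⊔ K) := fun h =>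
    P.not_dvd_index (h.trans (relIndex_dvd_index_of_le le_sup_left))
  have h2 : (P : Subgroup G).relIndex K = (P : Subgroup G).relIndex ((P : Subgroup G) ⊔ K) := by
    have a1 := relIndex_mul_relIndex ((P : Subgroup G) ⊓ K) P (P ⊔ K) inf_le_left le_sup_left
    have a2 := relIndex_mul_relIndex ((P : Subgroup G) ⊓ K) K (P ⊔ K) inf_le_right le_sup_right
    rw [inf_relIndex_left] at a1
    rw [inf_relIndex_right, relIndex_sup_right, ← a1, mul_comm] at a2
    exact Nat.eq_of_mul_eq_mul_left
      (Nat.pos_of_ne_zero (index_ne_zero_of_finite (H := K.subgroupOf (P : Subgroup G)))) a2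
  rwa [h2]

open Subgroup in
/-- Tate's theorem. -/
theorem tate_main {G : Type*} [Group G] [Finite G] {p : ℕ}
    [Fact p.Prime] (P : Sylow p G) (K : Subgroup G) [hK : K.Normal]
    (h : K.subgroupOf P ≤ frattini P) :
    Nat.Coprime (Nat.card (pResidual p K)) p := by
  have hp : p.Prime := Fact.out
  let s : Set G := {x | x ∈ K ∧ (orderOf x).Coprime p}
  have hsK : closure s ≤ K := (closure_le K).mpr fun x hx => hx.1
  have hn : (closure s).Normal := by
    refine ⟨fun n hn g => ?_⟩
    have : closure s ≤ (closure s).comap (MulAut.conj g).toMonoidHom := by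
      rw [closure_le]
      intro x hx
      refine subset_closure ⟨hK.conj_mem x hx.1 g, ?_⟩
      have : orderOf (g * x * g⁻¹) = orderOf x := (MulAut.conj g).orderOf_eq x
      change (orderOf (g * x * g⁻¹)).Coprime p
      rw [this]
      exact hx.2
    exact this hn
  have hbot := tate_aux P s (fun x hx => hx.2) (fun u hu => h (hsK hu))
  have hcard : ¬ p ∣ Nat.card (closure s) := by
    have := sylow_not_dvd_relIndex P (closure s)
    rwa [← inf_relIndex_right, disjoint_iff.mp (subgroupOf_eq_bot.mp hbot).symm,
      relIndex_bot_left] at this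
  have hle : pResidual p K ≤ (closure s).subgroupOf K := by
    refine iInf₂_le _ ⟨inferInstance, fun x => ?_⟩
    refine ⟨(orderOf (x : G)).factorization p, subset_closure ⟨K.pow_mem x.2 _, ?_⟩⟩
    have hpos := orderOf_pos (x : G)
    change (orderOf ((x : G) ^ _)).Coprime p
    rw [orderOf_pow_of_dvd (pow_ne_zero _ hp.ne_zero) (Nat.ordProj_dvd _ _)]
    exact (Nat.coprime_ordCompl hp hpos.ne').symm
  have hdvd : Nat.card (pResidual p K) ∣ Nat.card (closure s) := by
    rw [← Nat.card_congr (subgroupOfEquivOfLe hsK).toEquiv]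
    exact card_dvd_of_le hle
  exact ((hp.coprime_iff_not_dvd.mpr fun h => hcard (h.trans hdvd))).symm

/-- If `M, N ⊴ G` and `M ∩ S_p ≤ Φ(S_p)N` for a Sylow `p`-subgroup `S_p` of `G`, then
`O^p(MN/N)` is a `p'`-group. -/
theorem pResidual_coprime_of_inter_sylow {G : Type*} [Group G] [Finite G] {p : ℕ}
    (hp : p.Prime) (M N : Subgroup G) [M.Normal] [N.Normal] (S : Sylow p G)
    (h : M ⊓ (S : Subgroup G) ≤
      ((frattini ↥(S : Subgroup G)).map (S : Subgroup G).subtype) ⊔ N) :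
    Nat.Coprime
      (Nat.card (pResidual p ↥(Subgroup.map (QuotientGroup.mk' N) (M ⊔ N)))) p := by
  have : Fact p.Prime := ⟨hp⟩
  let π := QuotientGroup.mk' N
  have hπ : Function.Surjective π := QuotientGroup.mk'_surjective N
  have hKn : (Subgroup.map π (M ⊔ N)).Normal := Subgroup.Normal.map inferInstance π hπ
  let T := S.mapSurjective hπ
  have hT : (T : Subgroup (G ⧸ N)) = (S : Subgroup G).map π := rfl
  refine tate_main T (Subgroup.map π (M ⊔ N)) ?_
  have hKM : Subgroup.map π (M ⊔ N) = M.map π := by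
    have : N.map π = ⊥ := by
      rw [Subgroup.map_eq_bot_iff]; exact (QuotientGroup.ker_mk' N).ge
    rw [Subgroup.map_sup, this, sup_bot_eq]
  rw [hKM]
  let f : M →* M.map π := π.subgroupMap M
  have hf : Function.Surjective f := π.subgroupMap_surjective M
  let Z : Subgroup (M.map π) := ((S : Subgroup G).subgroupOf M).map f
  have hZi : ¬ p ∣ Z.index := fun hd =>
    sylow_not_dvd_relIndex S M (hd.trans (Subgroup.index_map_dvd _ hf))
  have hZT : Z ≤ (T : Subgroup (G ⧸ N)).subgroupOf (M.map π) := by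
    rintro _ ⟨x, hx, rfl⟩
    exact ⟨x, hx, rfl⟩
  have hTp : IsPGroup p ((T : Subgroup (G ⧸ N)).subgroupOf (M.map π)) :=
    T.isPGroup'.comap_subtype
  have hZp : IsPGroup p Z := hTp.to_le hZT
  have hEq := (hZp.toSylow hZi).is_maximal' hTp hZT
  intro u hu
  have hu2 : (⟨(u : G ⧸ N), hu⟩ : M.map π) ∈ Z := by
    have h3 : (⟨(u : G ⧸ N), hu⟩ : M.map π) ∈ (T : Subgroup (G ⧸ N)).subgroupOf (M.map π) := u.2
    rw [hEq] at h3
    exact h3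
  obtain ⟨x, hx, hxu⟩ := hu2
  have hxu' : π (x : G) = u := congrArg Subtype.val hxu
  obtain ⟨y, ⟨y', hy', rfl⟩, n, hn, hyn⟩ := Subgroup.mem_sup_of_normal_right.mp (h ⟨x.2, hx⟩)
  let g : S →* T := π.subgroupMap (S : Subgroup G)
  have hg : Function.Surjective g := π.subgroupMap_surjective (S : Subgroup G)
  have h4 := frattini_le_comap_frattini_of_surjective hg hy'
  have h5 : g y' = u := by
    apply Subtype.ext
    rw [← hxu', ← hyn, map_mul]
    have : π n = 1 := (QuotientGroup.eq_one_iff n).mpr hn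
    rw [this, mul_one]
    rfl
  rw [← h5]
  exact h4
end

section
/- Let G be a finite group and let G = G_0 > G_1 > ... be a sequence where each G_{i+1} is a proper characteristic subgroup of G_i with G_i/G_{i+1} non-nilpotent. Define r_i = Σ_p log_p |(G_i ∩ S_p)Φ(S_p)/Φ(S_p)| for fixed Sylow p-subgroups S_p of G. Then r_i > r_{i+1} for each i, and hence the sequence has length at most r_0 = Σ_p d(S_p). -/
theorem tate_aux_s15 {E : Type*} [Group E] (c u v x y : E) (h : c = u * v)
    (h' : u⁻¹ * x * v⁻¹ = v⁻¹ * (u⁻¹ * x)) : c⁻¹ * (x * y) = (u⁻¹ * x) * (v⁻¹ * y) := by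
  rw [h, mul_inv_rev, ← mul_assoc (u⁻¹ * x), h']
  group

open Subgroup in
theorem tate_transfer_s15 {G : Type*} [Group G] [Finite G] {p : ℕ} [Fact p.Prime] (P : Sylow p G)
    (K : Subgroup G) [K.Normal] (hK : K ≤ closure {g | g ∈ K ∧ ¬ p ∣ orderOf g})
    (hR : K.subgroupOf (P : Subgroup G) ≤ frattini (P : Subgroup G))
    {E : Type*} [Group E] (π : (P : Subgroup G) →* E) (hπ : Function.Surjective π)
    (ρ : E →* G ⧸ K) (hρ : ∀ x, ρ (π x) = QuotientGroup.mk' K (x : G))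
    (hcen : ∀ z ∈ ρ.ker, ∀ e : E, z * e = e * z) :
    K.subgroupOf (P : Subgroup G) ≤ π.ker := by
  have : Finite E := Finite.of_surjective _ hπ
  have hE : IsPGroup p E := P.isPGroup'.of_surjective π hπ
  let Z : Subgroup E := ρ.ker
  have hZ : IsPGroup p Z := hE.to_subgroup Z
  let _ : CommGroup Z := { (inferInstance : Group Z) with
    mul_comm := fun a b => Subtype.ext (hcen a a.2 b) }
  -- the fibre product
  let X : Subgroup (G × E) :=
    ((QuotientGroup.mk' K).comp (MonoidHom.fst G E)).eqLocus (ρ.comp (MonoidHom.snd G E))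
  have memX : ∀ a : G × E, a ∈ X ↔ QuotientGroup.mk' K a.1 = ρ a.2 := fun a => Iff.rfl
  let f : X →* G := (MonoidHom.fst G E).comp X.subtype
  let Y : Subgroup X := (P : Subgroup G).comap f
  have hY : ¬ p ∣ Y.index := by
    have h1 : Y.index = (P : Subgroup G).relIndex f.range := index_comap _ _
    have hle : (P : Subgroup G) ≤ f.range := by
      intro x hx
      exact ⟨⟨(x, π ⟨x, hx⟩), (memX _).2 (hρ ⟨x, hx⟩).symm⟩, rfl⟩
    rw [h1]
    intro h
    exact P.not_dvd_index (h.trans (relIndex_dvd_index_of_le hle))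
  -- the homomorphism on `Y`
  let φ : Y →* Z := MonoidHom.mk'
    (fun y => ⟨(π ⟨y.1.1.1, y.2⟩)⁻¹ * y.1.1.2, by
      have := (memX _).1 y.1.2
      change ρ _ = 1
      rw [map_mul, map_inv, hρ, ← this]
      simp⟩) (by
    intro a b
    apply Subtype.ext
    have h1 : (π ⟨(a * b).1.1.1, (a * b).2⟩) = π ⟨a.1.1.1, a.2⟩ * π ⟨b.1.1.1, b.2⟩ := by
      rw [← map_mul]; rfl
    have h2 : (π ⟨a.1.1.1, a.2⟩)⁻¹ * a.1.1.2 ∈ ρ.ker := by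
      have := (memX _).1 a.1.2
      change ρ _ = 1
      rw [map_mul, map_inv, hρ, ← this]
      simp
    have h3 := hcen _ h2 ((π ⟨b.1.1.1, b.2⟩)⁻¹)
    change (π ⟨(a * b).1.1.1, (a * b).2⟩)⁻¹ * (a.1.1.2 * b.1.1.2) =
      ((π ⟨a.1.1.1, a.2⟩)⁻¹ * a.1.1.2) * ((π ⟨b.1.1.1, b.2⟩)⁻¹ * b.1.1.2)
    exact tate_aux_s15 _ _ _ _ _ h1 h3)
  let τ : X →* Z := MonoidHom.transfer φ
  -- `K × 1` is killed
  have hKX : ∀ k ∈ K, ((k, 1) : G × E) ∈ X := by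
    intro k hk
    rw [memX]; simpa using hk
  let κ : K →* X := MonoidHom.mk' (fun k => ⟨(k.1, 1), hKX k.1 k.2⟩) (by
    intro a b; apply Subtype.ext; simp)
  have hκ : ∀ k : K, τ (κ k) = 1 := by
    have key : K ≤ ((τ.comp κ).ker).map K.subtype := by
      refine hK.trans ((closure_le _).2 ?_)
      rintro g ⟨hg, hpg⟩
      refine ⟨⟨g, hg⟩, ?_, rfl⟩
      change (τ.comp κ) ⟨g, hg⟩ = 1
      by_contra hne
      have h1 := hZ.dvd_orderOf hne
      refine hpg (h1.trans ((orderOf_map_dvd (τ.comp κ) (⟨g, hg⟩ : K)).trans ?_))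
      rw [Subgroup.orderOf_mk]
    intro k
    obtain ⟨k', hk', h⟩ := key k.2
    have : k' = k := Subtype.ext h
    exact this ▸ hk'
  have hZX : ∀ z ∈ ρ.ker, ((1, z) : G × E) ∈ X := by
    intro k hk
    rw [memX]; simpa using hk.symm
  have hτ : ∀ z (hz : z ∈ ρ.ker), τ ⟨(1, z), hZX z hz⟩ = (⟨z, hz⟩ : Z) ^ Y.index := by
    intro z hz
    have hc : ∀ (k : ℕ) (g₀ : X), g₀⁻¹ * (⟨(1, z), hZX z hz⟩ : X) ^ k * g₀ ∈ Y →
        g₀⁻¹ * (⟨(1, z), hZX z hz⟩ : X) ^ k * g₀ = (⟨(1, z), hZX z hz⟩ : X) ^ k := by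
      intro k g₀ _
      have : (⟨(1, z), hZX z hz⟩ : X) ^ k * g₀ = g₀ * (⟨(1, z), hZX z hz⟩ : X) ^ k := by
        have : Commute (⟨(1, z), hZX z hz⟩ : X) g₀ := by
          apply Subtype.ext
          apply Prod.ext
          · simp
          · exact hcen z hz _
        exact this.pow_left k
      rw [mul_assoc, this]; group
    change MonoidHom.transfer φ _ = _
    rw [MonoidHom.transfer_eq_pow φ _ hc]
    apply Subtype.ext
    change (π ⟨_, _⟩)⁻¹ * _ = _
    have e1 : ∀ n : ℕ, (((⟨(1, z), hZX z hz⟩ : X) ^ n : X) : G × E) = (1, z ^ n) := by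
      intro n; simp
    have e2 : ∀ (h), π (⟨((((⟨(1, z), hZX z hz⟩ : X) ^ Y.index : X) : G × E)).1, h⟩ :
        (P : Subgroup G)) = 1 := by
      intro h
      rw [← map_one π]
      congr 1
      apply Subtype.ext
      simp
    refine (congrArg (fun t => t⁻¹ * _) (e2 _)).trans ?_
    simp
  -- the homomorphism on `P`
  let σ : (P : Subgroup G) →* X := MonoidHom.mk'
    (fun x => ⟨((x : G), π x), (memX _).2 (hρ x).symm⟩) (by
      intro a b; apply Subtype.ext; simp)
  let δ : (P : Subgroup G) →* Z := τ.comp σ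
  have hπR : ∀ r : (P : Subgroup G), r ∈ K.subgroupOf (P : Subgroup G) → π r ∈ ρ.ker := by
    intro r hr
    change ρ _ = 1
    rw [hρ]
    simpa [mem_subgroupOf] using hr
  have hδ : ∀ (r : (P : Subgroup G)) (hr : r ∈ K.subgroupOf (P : Subgroup G)),
      δ r = (⟨π r, hπR r hr⟩ : Z) ^ Y.index := by
    intro r hr
    have : σ r = κ ⟨r, hr⟩ * ⟨(1, π r), hZX _ (hπR r hr)⟩ := by
      apply Subtype.ext
      change ((r : G), π r) = ((r : G), 1) * (1, π r)
      simp
    change τ (σ r) = _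
    rw [this, map_mul, hκ, one_mul, hτ]
  have hcop : p.Coprime Y.index := ((Fact.out : p.Prime).coprime_iff_not_dvd).2 hY
  have htop : δ.ker ⊔ frattini (P : Subgroup G) = ⊤ := by
    rw [eq_top_iff]
    refine le_trans ?_ (sup_le_sup_left hR _)
    intro x _
    obtain ⟨w, hw⟩ := (hZ.powEquiv hcop).surjective (δ x)
    obtain ⟨r, hr⟩ := hπ w.1
    have hrK : r ∈ K.subgroupOf (P : Subgroup G) := by
      have h1 : ρ (π r) = 1 := hr ▸ w.2
      rw [hρ] at h1
      simpa [mem_subgroupOf] using h1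
    have h2 : δ r = δ x := by
      rw [hδ r hrK, ← hw, IsPGroup.powEquiv_apply]
      congr 1
      exact Subtype.ext hr
    have h3 : x * r⁻¹ ∈ δ.ker := by
      rw [MonoidHom.mem_ker, map_mul, map_inv, h2, mul_inv_cancel]
    have := mul_mem_sup h3 hrK
    simpa using this
  have hker := frattini_nongenerating htop
  intro r hr
  have h1 : δ r = 1 := by
    have : r ∈ δ.ker := hker ▸ mem_top r
    exact this
  rw [hδ r hr] at h1
  have h2 := (hZ.powEquiv hcop).injective
    (a₁ := ⟨π r, hπR r hr⟩) (a₂ := 1) (by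
      rw [IsPGroup.powEquiv_apply, IsPGroup.powEquiv_apply, h1, one_pow])
  exact congrArg Subtype.val h2

open Subgroup in
theorem tate_core {G : Type*} [Group G] [Finite G] {p : ℕ} [Fact p.Prime] (P : Sylow p G)
    (K : Subgroup G) [K.Normal] (hK : K ≤ closure {g | g ∈ K ∧ ¬ p ∣ orderOf g})
    (hR : K.subgroupOf (P : Subgroup G) ≤ frattini (P : Subgroup G)) :
    K.subgroupOf (P : Subgroup G) = ⊥ := by
  set R := K.subgroupOf (P : Subgroup G) with hRdef
  let L : Subgroup (P : Subgroup G) := ⁅R, ⊤⁆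
  have hLR : L ≤ R := commutator_le_left _ _
  have key : R ≤ L := by
    have h := tate_transfer_s15 P K hK hR (QuotientGroup.mk' L) (QuotientGroup.mk'_surjective L)
      (QuotientGroup.lift L ((QuotientGroup.mk' K).comp (P : Subgroup G).subtype) (by
        intro x hx
        have := hLR hx
        simpa [hRdef, mem_subgroupOf] using this)) (fun x => rfl) (by
        intro z hz e
        obtain ⟨x, rfl⟩ := QuotientGroup.mk'_surjective L z
        obtain ⟨y, rfl⟩ := QuotientGroup.mk'_surjective L e
        have hx : x ∈ R := by
          have h1 : QuotientGroup.mk' K (x : G) = 1 := hz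
          simpa [hRdef, mem_subgroupOf] using h1
        have h2 : x * y * x⁻¹ * y⁻¹ ∈ L := commutator_mem_commutator hx (mem_top y)
        rw [← map_mul, ← map_mul, ← mul_inv_eq_one, ← map_inv, ← map_mul,
          ← MonoidHom.mem_ker, QuotientGroup.ker_mk']
        simpa [mul_assoc] using h2)
    rwa [QuotientGroup.ker_mk'] at h
  have hnil : Group.IsNilpotent (P : Subgroup G) := P.isPGroup'.isNilpotent
  obtain ⟨n, hn⟩ := Subgroup.nilpotent_iff_lowerCentralSeries.1 hnil
  have hall : ∀ n, R ≤ (⊤ : Subgroup (P : Subgroup G)).lowerCentralSeries n := by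
    intro n
    induction n with
    | zero => exact le_top
    | succ n ih =>
      rw [Subgroup.lowerCentralSeries_succ]
      exact key.trans (commutator_mono ih le_rfl)
  rw [eq_bot_iff, ← hn]
  exact hall n

open Subgroup in
theorem tate_complement {G : Type*} [Group G] [Finite G] {p : ℕ} [Fact p.Prime] (P : Sylow p G)
    (M : Subgroup G) [hM : M.Normal]
    (hR : M.subgroupOf (P : Subgroup G) ≤ frattini (P : Subgroup G)) :
    ∃ K : Subgroup G, K.Normal ∧ (∀ k ∈ K, ¬ p ∣ orderOf k) ∧ ∀ m ∈ M, ∃ k : ℕ, m ^ p ^ k ∈ K := by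
  have hp : p.Prime := Fact.out
  let s : Set G := {g | g ∈ M ∧ ¬ p ∣ orderOf g}
  let K := normalClosure s
  have hKM : K ≤ M := normalClosure_le_normal fun g hg => hg.1
  have hKn : K.Normal := normalClosure_normal
  have hK : K ≤ closure {g | g ∈ K ∧ ¬ p ∣ orderOf g} := by
    refine closure_mono ?_
    intro g hg
    refine ⟨subset_closure hg, ?_⟩
    obtain ⟨a, ha, hag⟩ := Group.mem_conjugatesOfSet_iff.1 hg
    obtain ⟨c, hc⟩ := hag
    rw [← hc.orderOf_eq]
    exact ha.2
  have hbot := tate_core P K hK (le_trans (fun x hx => hKM hx) hR)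
  refine ⟨K, hKn, ?_, ?_⟩
  · intro k hk hpk
    -- an element of order `p` in `K`
    have hpos : 0 < orderOf k := orderOf_pos k
    obtain ⟨n, hn⟩ := hpk
    have hn0 : n ≠ 0 := by rintro rfl; rw [mul_zero] at hn; omega
    have hz : orderOf (k ^ n) = p := by
      rw [orderOf_pow_of_dvd hn0 ⟨p, by rw [hn, mul_comm]⟩, hn]
      exact Nat.mul_div_cancel _ (Nat.pos_of_ne_zero hn0)
    have hzK : k ^ n ∈ K := pow_mem hk n
    have hpg : IsPGroup p (zpowers (k ^ n)) :=
      IsPGroup.of_card (n := 1) (by rw [Nat.card_zpowers, hz, pow_one])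
    obtain ⟨Q, hQ⟩ := hpg.exists_le_sylow
    obtain ⟨g, hg⟩ := MulAction.exists_smul_eq G Q P
    have h1 : g * k ^ n * g⁻¹ ∈ (P : Subgroup G) := by
      rw [← hg]
      exact ⟨k ^ n, hQ (mem_zpowers (k ^ n)), rfl⟩
    have h2 : g * k ^ n * g⁻¹ ∈ K := hKn.conj_mem _ hzK g
    have h3 : (⟨_, h1⟩ : (P : Subgroup G)) ∈ K.subgroupOf (P : Subgroup G) := h2
    rw [hbot, mem_bot] at h3
    have h4 : g * k ^ n * g⁻¹ = 1 := congrArg Subtype.val h3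
    have h5 : k ^ n = 1 := by simpa using h4
    rw [h5, orderOf_one] at hz
    exact hp.one_lt.ne hz
  · intro m hm
    obtain ⟨e, n', hn', he⟩ := Nat.exists_eq_pow_mul_and_not_dvd (orderOf_pos m).ne' p hp.ne_one
    refine ⟨e, subset_normalClosure ⟨pow_mem hm _, ?_⟩⟩
    have hpe : p ^ e ≠ 0 := pow_ne_zero _ hp.ne_zero
    rw [orderOf_pow_of_dvd hpe ⟨n', he⟩, he, Nat.mul_div_cancel_left _ (Nat.pos_of_ne_zero hpe)]
    exact hn'

open Subgroup in
theorem tate_nilpotent {G : Type*} [Group G] [Finite G] (M : Subgroup G) [hM : M.Normal]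
    (h : ∀ p ∈ (Nat.card G).primeFactors, ∃ P : Sylow p G,
      M.subgroupOf (P : Subgroup G) ≤ frattini (P : Subgroup G)) : Group.IsNilpotent M := by
  have h' : ∀ p : (Nat.card G).primeFactors, ∃ K : Subgroup G, K.Normal ∧
      (∀ k ∈ K, ¬ p.1 ∣ orderOf k) ∧ ∀ m ∈ M, ∃ k : ℕ, m ^ p.1 ^ k ∈ K := by
    rintro ⟨p, hp⟩
    have : Fact p.Prime := ⟨Nat.prime_of_mem_primeFactors hp⟩
    obtain ⟨P, hP⟩ := h p hp
    exact tate_complement P M hP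
  choose K hKn hK1 hK2 using h'
  have hnil : ∀ p, Group.IsNilpotent (M ⧸ (K p).subgroupOf M) := by
    rintro p
    have : Fact p.1.Prime := ⟨Nat.prime_of_mem_primeFactors p.2⟩
    have hpg : IsPGroup p.1 (M ⧸ (K p).subgroupOf M) := by
      rw [isPGroup_iff_pow_pow_eq_one]
      intro x
      obtain ⟨m, rfl⟩ := QuotientGroup.mk'_surjective _ x
      obtain ⟨k, hk⟩ := hK2 p m.1 m.2
      refine ⟨k, ?_⟩
      rw [← map_pow, ← MonoidHom.mem_ker, QuotientGroup.ker_mk', mem_subgroupOf]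
      exact hk
    exact hpg.isNilpotent
  let F : M →* ∀ p, M ⧸ (K p).subgroupOf M :=
    MonoidHom.pi fun p => QuotientGroup.mk' ((K p).subgroupOf M)
  refine Subgroup.isNilpotent_of_ker_le_center F ?_
  intro m hm
  suffices m = 1 by rw [this]; exact one_mem _
  by_contra hne
  have h1 : orderOf (m : G) ≠ 1 := by
    rw [Ne, orderOf_eq_one_iff]
    exact fun h => hne (Subtype.ext h)
  obtain ⟨p, hp, hpm⟩ := Nat.exists_prime_and_dvd h1
  have hpG : p ∈ (Nat.card G).primeFactors :=
    Nat.mem_primeFactors.2 ⟨hp, hpm.trans (orderOf_dvd_natCard _), Nat.card_pos.ne'⟩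
  refine hK1 ⟨p, hpG⟩ m ?_ hpm
  have h2 : QuotientGroup.mk' ((K ⟨p, hpG⟩).subgroupOf M) m = 1 := congrFun hm ⟨p, hpG⟩
  rwa [← MonoidHom.mem_ker, QuotientGroup.ker_mk', mem_subgroupOf] at h2

open Subgroup in
theorem tate_quotient {G : Type*} [Group G] [Finite G] (A B : Subgroup G) [hA : A.Normal]
    [hB : B.Normal] (hBA : B ≤ A) (S : ∀ p : ℕ, Sylow p G)
    (h : ∀ p ∈ (Nat.card G).primeFactors,
      A ⊓ (S p : Subgroup G) ≤ B ⊓ (S p : Subgroup G) ⊔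
        (frattini ↥(S p : Subgroup G)).map (S p : Subgroup G).subtype)
    (N : Subgroup A) [N.Normal] (hN : N = B.subgroupOf A) : Group.IsNilpotent (A ⧸ N) := by
  let f := QuotientGroup.mk' B
  have hf : Function.Surjective f := QuotientGroup.mk'_surjective B
  have hM : (A.map f).Normal := hA.map f hf
  have hnil : Group.IsNilpotent (A.map f) := by
    apply tate_nilpotent
    intro p hp
    have hpr : p.Prime := Nat.prime_of_mem_primeFactors hp
    have : Fact p.Prime := ⟨hpr⟩
    have hpG : p ∈ (Nat.card G).primeFactors := by
      refine Nat.mem_primeFactors.2 ⟨hpr, (Nat.dvd_of_mem_primeFactors hp).trans ?_,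
        Nat.card_pos.ne'⟩
      exact card_quotient_dvd_card B
    refine ⟨(S p).mapSurjective hf, ?_⟩
    have key : A ⊓ (S p : Subgroup G) ≤
        (((frattini ↥((S p : Subgroup G).map f)).map ((S p : Subgroup G).map f).subtype)).comap f := by
      refine (h p hpG).trans (sup_le ?_ ?_)
      · intro b hb
        have : f b = 1 := (QuotientGroup.eq_one_iff b).2 hb.1
        rw [mem_comap, this]
        exact one_mem _
      · rintro _ ⟨x, hx, rfl⟩
        have h1 := frattini_le_comap_frattini_of_surjective
          (f.subgroupMap_surjective (S p : Subgroup G)) hx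
        exact ⟨_, h1, rfl⟩
    rintro ⟨x, hx⟩ hxM
    obtain ⟨s, hs, rfl⟩ := hx
    obtain ⟨a, ha, has⟩ := hxM
    have hsA : s ∈ A := by
      have h1 : a⁻¹ * s ∈ B := QuotientGroup.eq.1 has
      have := mul_mem ha (hBA h1)
      simpa using this
    obtain ⟨y, hy, hys⟩ := key ⟨hsA, hs⟩
    have : y = ⟨f s, ⟨s, hs, rfl⟩⟩ := Subtype.ext hys
    rw [this] at hy
    exact hy
  let g : A →* A.map f := f.subgroupMap A
  have hg : ∀ a : A, g a = 1 ↔ a ∈ N := by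
    intro a
    rw [hN, mem_subgroupOf, ← QuotientGroup.eq_one_iff]
    exact ⟨fun h => congrArg Subtype.val h, fun h => Subtype.ext h⟩
  refine Subgroup.isNilpotent_of_ker_le_center
    (QuotientGroup.lift N g (fun a ha => (hg a).2 ha)) ?_
  intro x hx
  obtain ⟨a, rfl⟩ := QuotientGroup.mk'_surjective N x
  have h1 : g a = 1 := hx
  have h2 : QuotientGroup.mk' N a = 1 := (QuotientGroup.eq_one_iff a).2 ((hg a).1 h1)
  rw [h2]
  exact one_mem _

open Subgroup in
theorem pgroup_coatom {Q : Type*} [Group Q] [Finite Q] {p : ℕ} [Fact p.Prime] (hQ : IsPGroup p Q)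
    (H : Subgroup Q) (hH : IsCoatom H) :
    (∀ x, x ^ p ∈ H) ∧ commutator Q ≤ H := by
  have hnil : Group.IsNilpotent Q := hQ.isNilpotent
  have htf := (Group.isNilpotent_of_finite_tfae (G := Q)).out 0 2
  have hn : H.Normal := htf.1 hnil H hH
  have hnt : Nontrivial (Q ⧸ H) := QuotientGroup.nontrivial_iff.2 hH.1
  have hT : IsPGroup p (Q ⧸ H) := hQ.to_quotient H
  obtain ⟨n, hn0, hc⟩ := hT.nontrivial_iff_card.1 hnt
  obtain ⟨t, ht⟩ := exists_prime_orderOf_dvd_card' (G := Q ⧸ H) p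
    (hc ▸ dvd_pow_self p hn0.ne')
  have htop : zpowers t = ⊤ := by
    have hle : H ≤ (zpowers t).comap (QuotientGroup.mk' H) := by
      intro x hx
      have : QuotientGroup.mk' H x = 1 := (QuotientGroup.eq_one_iff x).2 hx
      rw [mem_comap, this]
      exact one_mem _
    rcases hle.lt_or_eq with hlt | heq
    · have := hH.2 _ hlt
      rw [eq_top_iff]
      intro x _
      obtain ⟨y, rfl⟩ := QuotientGroup.mk'_surjective H x
      have : y ∈ (zpowers t).comap (QuotientGroup.mk' H) := this ▸ mem_top y
      exact this
    · exfalso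
      obtain ⟨y, rfl⟩ := QuotientGroup.mk'_surjective H t
      have hy : y ∈ (zpowers (QuotientGroup.mk' H y)).comap (QuotientGroup.mk' H) :=
        mem_zpowers _
      rw [← heq] at hy
      have : QuotientGroup.mk' H y = 1 := (QuotientGroup.eq_one_iff y).2 hy
      rw [this, orderOf_one] at ht
      exact (Fact.out : p.Prime).one_lt.ne ht
  have hcard : Nat.card (Q ⧸ H) = p := by
    rw [← ht, ← Nat.card_zpowers, htop, card_top]
  have hcyc : IsCyclic (Q ⧸ H) := isCyclic_of_prime_card hcard
  refine ⟨?_, ?_⟩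
  · intro x
    rw [← QuotientGroup.eq_one_iff, QuotientGroup.mk_pow, ← hcard, pow_card_eq_one']
  · rw [← Normal.quotient_commutative_iff_commutator_le]
    infer_instance

open Subgroup in
theorem card_frattini_quotient {Q : Type*} [Group Q] [Finite Q] {p : ℕ} [Fact p.Prime]
    (hQ : IsPGroup p Q) : Nat.card (Q ⧸ frattini Q) ∣ p ^ Group.rank Q := by
  have hpow : ∀ x : Q, x ^ p ∈ frattini Q := by
    intro x
    simp only [frattini, Order.radical, mem_iInf]
    exact fun H hH => (pgroup_coatom hQ H hH).1 x
  have hcom : commutator Q ≤ frattini Q := by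
    simp only [frattini, Order.radical, le_iInf_iff]
    exact fun H hH => (pgroup_coatom hQ H hH).2
  have hcomm := Normal.quotient_commutative_iff_commutator_le.2 hcom
  let _ : CommGroup (Q ⧸ frattini Q) := { (inferInstance : Group (Q ⧸ frattini Q)) with
    mul_comm := fun a b => hcomm.is_comm.comm a b }
  have h1 : Nat.card (Q ⧸ frattini Q) ∣ p ^ Group.rank (Q ⧸ frattini Q) := by
    apply card_dvd_exponent_pow_rank'
    intro g
    obtain ⟨x, rfl⟩ := QuotientGroup.mk'_surjective _ g
    rw [← map_pow]
    exact (QuotientGroup.eq_one_iff _).2 (hpow x)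
  exact h1.trans (pow_dvd_pow _
    (Group.rank_le_of_surjective (QuotientGroup.mk' (frattini Q)) (QuotientGroup.mk'_surjective _)))

open Subgroup in
theorem log_term_aux {G : Type*} [Group G] [Finite G] {p : ℕ} [Fact p.Prime] {F U V T : Subgroup G}
    (hT : IsPGroup p T) (hF : F ≤ U) (hUV : U ≤ V) (hV : V ≤ T) :
    Nat.log p (Nat.card U / Nat.card F) ≤ Nat.log p (Nat.card V / Nat.card F) ∧
    (Nat.log p (Nat.card U / Nat.card F) = Nat.log p (Nat.card V / Nat.card F) → U = V) := by
  have hp : p.Prime := Fact.out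
  obtain ⟨a, ha⟩ := IsPGroup.iff_card.1 (hT.to_le ((hF.trans hUV).trans hV))
  obtain ⟨b, hb⟩ := IsPGroup.iff_card.1 (hT.to_le (hUV.trans hV))
  obtain ⟨c, hc⟩ := IsPGroup.iff_card.1 (hT.to_le hV)
  have hab : a ≤ b := by
    have := card_dvd_of_le hF
    rw [ha, hb] at this
    exact (Nat.pow_dvd_pow_iff_le_right hp.one_lt).1 this
  have hbc : b ≤ c := by
    have := card_dvd_of_le hUV
    rw [hb, hc] at this
    exact (Nat.pow_dvd_pow_iff_le_right hp.one_lt).1 this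
  rw [ha, hb, hc, Nat.pow_div hab hp.pos, Nat.pow_div (hab.trans hbc) hp.pos,
    Nat.log_pow hp.one_lt, Nat.log_pow hp.one_lt]
  refine ⟨by omega, fun h => eq_of_le_of_card_ge hUV ?_⟩
  have : b = c := by omega
  rw [hb, hc, this]

/-- Let `G = G_0 > G_1 > ...` be a chain in which each `G_{i+1}` is a proper characteristic
subgroup of `G_i` with `G_i/G_{i+1}` non-nilpotent. With
`r_i = Σ_p log_p |(G_i ∩ S_p)Φ(S_p)/Φ(S_p)|`, the sequence `r_i` is strictly decreasing,
so the chain has length at most `r_0 = Σ_p d(S_p)`. -/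
theorem chain_length_le_sum_rank {G : Type*} [Group G] [Finite G]
    (t : ℕ) (Gs : Fin (t + 1) → Subgroup G) (h0 : Gs 0 = ⊤)
    (hlt : ∀ i : Fin t, Gs i.succ < Gs i.castSucc)
    (hchar : ∀ i : Fin t, ((Gs i.succ).subgroupOf (Gs i.castSucc)).Characteristic)
    (hnonnil : ∀ i : Fin t, ¬ Group.IsNilpotent
      (↥(Gs i.castSucc) ⧸ Subgroup.normalClosure
        (((Gs i.succ).subgroupOf (Gs i.castSucc) : Subgroup ↥(Gs i.castSucc)) :
          Set ↥(Gs i.castSucc))))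
    (S : ∀ p : ℕ, Sylow p G) :
    (∀ i : Fin t,
        (∑ p ∈ (Nat.card G).primeFactors, Nat.log p
          (Nat.card ↥(Gs i.succ ⊓ (S p : Subgroup G) ⊔
              (frattini ↥(S p : Subgroup G)).map (S p : Subgroup G).subtype) /
            Nat.card ↥((frattini ↥(S p : Subgroup G)).map (S p : Subgroup G).subtype))) <
        ∑ p ∈ (Nat.card G).primeFactors, Nat.log p
          (Nat.card ↥(Gs i.castSucc ⊓ (S p : Subgroup G) ⊔
              (frattini ↥(S p : Subgroup G)).map (S p : Subgroup G).subtype) /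
            Nat.card ↥((frattini ↥(S p : Subgroup G)).map (S p : Subgroup G).subtype))) ∧
      t ≤ ∑ p ∈ (Nat.card G).primeFactors, Group.rank ↥(S p : Subgroup G) := by
  have hnorm : ∀ i, (Gs i).Normal := by
    intro i
    induction i using Fin.induction with
    | zero => rw [h0]; infer_instance
    | succ i ih =>
      have := hchar i
      have h1 : (((Gs i.succ).subgroupOf (Gs i.castSucc)).map (Gs i.castSucc).subtype).Normal :=
        ConjAct.normal_of_characteristic_of_normal
      rwa [Subgroup.subgroupOf_map_subtype, inf_eq_left.2 (hlt i).le] at h1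
  have hFle : ∀ p, (frattini ↥(S p : Subgroup G)).map (S p : Subgroup G).subtype ≤
      (S p : Subgroup G) := fun p => Subgroup.map_subtype_le _
  have hdec : ∀ i : Fin t,
        (∑ p ∈ (Nat.card G).primeFactors, Nat.log p
          (Nat.card ↥(Gs i.succ ⊓ (S p : Subgroup G) ⊔
              (frattini ↥(S p : Subgroup G)).map (S p : Subgroup G).subtype) /
            Nat.card ↥((frattini ↥(S p : Subgroup G)).map (S p : Subgroup G).subtype))) <
        ∑ p ∈ (Nat.card G).primeFactors, Nat.log p
          (Nat.card ↥(Gs i.castSucc ⊓ (S p : Subgroup G) ⊔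
              (frattini ↥(S p : Subgroup G)).map (S p : Subgroup G).subtype) /
            Nat.card ↥((frattini ↥(S p : Subgroup G)).map (S p : Subgroup G).subtype)) := by
    intro i
    have haux : ∀ p ∈ (Nat.card G).primeFactors, _ := fun p hp =>
      haveI : Fact p.Prime := ⟨Nat.prime_of_mem_primeFactors hp⟩
      log_term_aux (p := p) (S p).isPGroup'
        (F := (frattini ↥(S p : Subgroup G)).map (S p : Subgroup G).subtype)
        (U := Gs i.succ ⊓ (S p : Subgroup G) ⊔
              (frattini ↥(S p : Subgroup G)).map (S p : Subgroup G).subtype)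
        (V := Gs i.castSucc ⊓ (S p : Subgroup G) ⊔
              (frattini ↥(S p : Subgroup G)).map (S p : Subgroup G).subtype)
        le_sup_right (sup_le_sup_right (inf_le_inf_right _ (hlt i).le) _)
        (sup_le inf_le_right (hFle p))
    refine lt_of_le_of_ne (Finset.sum_le_sum fun p hp => (haux p hp).1) ?_
    intro heq
    have heq' := (Finset.sum_eq_sum_iff_of_le fun p hp => (haux p hp).1).1 heq
    apply hnonnil i
    have := hnorm i.succ
    have := hnorm i.castSucc
    refine tate_quotient (Gs i.castSucc) (Gs i.succ) (hlt i).le S ?_ _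
      (Subgroup.normalClosure_eq_self _)
    intro p hp
    rw [(haux p hp).2 (heq' p hp)]
    exact le_sup_left
  refine ⟨hdec, ?_⟩
  let r : Fin (t + 1) → ℕ := fun i => ∑ p ∈ (Nat.card G).primeFactors, Nat.log p
          (Nat.card ↥(Gs i ⊓ (S p : Subgroup G) ⊔
              (frattini ↥(S p : Subgroup G)).map (S p : Subgroup G).subtype) /
            Nat.card ↥((frattini ↥(S p : Subgroup G)).map (S p : Subgroup G).subtype))
  have hr : ∀ i : Fin (t + 1), r i + i.1 ≤ r 0 := by
    intro i
    induction i using Fin.induction with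
    | zero => simp
    | succ i ih =>
      have h1 : r i.succ < r i.castSucc := hdec i
      simp only [Fin.val_castSucc, Fin.val_succ] at ih ⊢
      omega
  have ht : t ≤ r 0 := by
    have := hr (Fin.last t)
    simp only [Fin.val_last] at this
    omega
  refine ht.trans (Finset.sum_le_sum fun p hp => ?_)
  have hpr : p.Prime := Nat.prime_of_mem_primeFactors hp
  have : Fact p.Prime := ⟨hpr⟩
  rw [h0, top_inf_eq, sup_eq_left.2 (hFle p)]
  have h2 : Nat.card ↥(S p : Subgroup G) /
      Nat.card ↥((frattini ↥(S p : Subgroup G)).map (S p : Subgroup G).subtype) =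
      Nat.card (↥(S p : Subgroup G) ⧸ frattini ↥(S p : Subgroup G)) := by
    rw [Subgroup.card_map_of_injective (Subgroup.subtype_injective _),
      Subgroup.card_eq_card_quotient_mul_card_subgroup (frattini ↥(S p : Subgroup G)),
      Nat.mul_div_cancel _ Nat.card_pos]
  rw [h2]
  calc Nat.log p _ ≤ Nat.log p (p ^ Group.rank ↥(S p : Subgroup G)) :=
        Nat.log_mono_right (Nat.le_of_dvd (pow_pos hpr.pos _)
          (card_frattini_quotient (S p).isPGroup'))
    _ = _ := Nat.log_pow hpr.one_lt _
end

section
/- Let p and q be distinct primes and s, t positive integers. Then there are only finitely many natural numbers x with s_p(x) ≤ s and s_q(x) ≤ t, where s_p(x) denotes the digit sum of x in base p. -/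
open Polynomial in
/-- The iterated Euler operator `X * d/dX`. -/
noncomputable def eulerOp {R : Type*} [CommRing R] (i : ℕ) (f : R[X]) : R[X] :=
  (fun g : R[X] => X * derivative g)^[i] f

open Polynomial in
lemma eulerOp_coeff {R : Type*} [CommRing R] (i : ℕ) (f : R[X]) (n : ℕ) :
    (eulerOp i f).coeff n = (n : R) ^ i * f.coeff n := by
  induction i with
  | zero => simp [eulerOp]
  | succ i ih =>
    rw [eulerOp, Function.iterate_succ_apply', ← eulerOp]
    cases n with
    | zero => simp
    | succ n =>
      rw [coeff_X_mul, coeff_derivative, ih]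
      push_cast
      ring

open Polynomial in
lemma eulerOp_natDegree {R : Type*} [CommRing R] (i : ℕ) (f : R[X]) :
    (eulerOp i f).natDegree ≤ f.natDegree := by
  rw [natDegree_le_iff_coeff_eq_zero]
  intro n hn
  rw [eulerOp_coeff, coeff_eq_zero_of_natDegree_lt hn, mul_zero]

open Polynomial in
lemma eulerOp_dvd {R : Type*} [CommRing R] (u : R) (i v : ℕ) (f : R[X])
    (h : (X - C u) ^ (v + i) ∣ f) : (X - C u) ^ v ∣ eulerOp i f := by
  induction i generalizing v with
  | zero => simpa [eulerOp] using h
  | succ i ih =>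
    rw [eulerOp, Function.iterate_succ_apply', ← eulerOp]
    obtain ⟨g, hg⟩ := ih (v + 1) (by convert h using 2; ring)
    rw [hg, derivative_mul, derivative_pow]
    refine Dvd.dvd.mul_left (dvd_add ?_ ?_) _
    · simp only [Nat.add_sub_cancel]
      exact Dvd.intro_left (C ((v + 1 : ℕ) : R) * derivative (X - C u) * g) (by ring)
    · rw [pow_succ, mul_assoc]
      exact Dvd.intro _ rfl

open Polynomial in
lemma coeff_prod_sum {R ι : Type*} [CommRing R] (s : Finset ι) (f : ι → R[X]) (d : ι → ℕ)
    (h : ∀ i ∈ s, (f i).natDegree ≤ d i) :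
    (∏ i ∈ s, f i).natDegree ≤ ∑ i ∈ s, d i ∧
    (∏ i ∈ s, f i).coeff (∑ i ∈ s, d i) = ∏ i ∈ s, (f i).coeff (d i) := by
  classical
  induction s using Finset.induction_on with
  | empty => simp
  | insert a s ha ih =>
    have h1 := h a (Finset.mem_insert_self a s)
    obtain ⟨h2, h3⟩ := ih (fun i hi => h i (Finset.mem_insert_of_mem hi))
    rw [Finset.prod_insert ha, Finset.sum_insert ha, Finset.prod_insert ha]
    refine ⟨natDegree_mul_le_of_le h1 h2, ?_⟩
    rw [coeff_mul_add_eq_of_natDegree_le h1 h2, h3]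

open Polynomial in
theorem wronskian_bound {n : ℕ} (f : Fin n → ℤ[X]) (hf : ∀ j, f j ≠ 0)
    (hinj : Function.Injective (fun j => (f j).natDegree)) (H D : ℕ) (hD1 : 1 ≤ D)
    (hH : ∀ j, |(f j).leadingCoeff| ≤ H) (hD : ∀ j, (f j).natDegree ≤ D)
    (y : Fin n → ℚ) (j0 : Fin n) (hy : y j0 ≠ 0) (u : ℚ) (v : ℕ)
    (hdvd : (X - C u) ^ (v + n) ∣ ∑ j, C (y j) * (f j).map (Int.castRingHom ℚ)) :
    (u.den : ℤ) ^ v ≤ (H : ℤ) ^ n * (D : ℤ) ^ (n * n) := by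
  classical
  set A : Matrix (Fin n) (Fin n) ℤ[X] := Matrix.of fun i j => eulerOp (i : ℕ) (f j) with hA
  set W := A.det with hW
  set S := ∑ j, (f j).natDegree with hS
  have hterm : ∀ σ : Equiv.Perm (Fin n), (∏ j, A (σ j) j).natDegree ≤ S ∧
      (∏ j, A (σ j) j).coeff S = ∏ j, ((f j).natDegree : ℤ) ^ ((σ j : Fin n) : ℕ) *
        (f j).leadingCoeff := by
    intro σ
    have := coeff_prod_sum Finset.univ (fun j => A (σ j) j) (fun j => (f j).natDegree)
      (fun j _ => eulerOp_natDegree _ _)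
    refine ⟨this.1, ?_⟩
    rw [this.2]
    refine Finset.prod_congr rfl fun j _ => ?_
    simp only [hA, Matrix.of_apply]
    rw [eulerOp_coeff]
    rfl
  have hdeg : W.natDegree ≤ S := by
    rw [hW, Matrix.det_apply]
    refine natDegree_sum_le_of_forall_le _ _ fun σ _ => ?_
    refine (natDegree_smul_le _ _).trans (hterm σ).1
  have hcoef : W.coeff S = (∏ j, (f j).leadingCoeff) *
      (Matrix.vandermonde (fun j => ((f j).natDegree : ℤ))).det := by
    rw [← Matrix.det_transpose (Matrix.vandermonde _), ← Matrix.det_mul_row, hW,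
      Matrix.det_apply, Matrix.det_apply, finsetSum_coeff]
    refine Finset.sum_congr rfl fun σ _ => ?_
    rw [coeff_smul, (hterm σ).2]
    congr 1
    refine Finset.prod_congr rfl fun j _ => ?_
    simp [Matrix.vandermonde_apply, mul_comm]
  have hne : W.coeff S ≠ 0 := by
    rw [hcoef]
    refine mul_ne_zero (Finset.prod_ne_zero_iff.2 fun j _ => leadingCoeff_ne_zero.2 (hf j)) ?_
    rw [Matrix.det_vandermonde_ne_zero_iff]
    intro a b hab
    simp only [Nat.cast_inj] at hab
    exact hinj hab
  have hWdeg : W.natDegree = S := natDegree_eq_of_le_of_coeff_ne_zero hdeg hne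
  -- divisibility over the rationals
  have hdv : (X - C u) ^ v ∣ W.map (Int.castRingHom ℚ) := by
    set B : Matrix (Fin n) (Fin n) ℚ[X] := Matrix.of fun i j =>
      eulerOp (i : ℕ) ((f j).map (Int.castRingHom ℚ)) with hB
    have hWB : W.map (Int.castRingHom ℚ) = B.det := by
      rw [hW, ← coe_mapRingHom, RingHom.map_det]
      congr 1
      ext i j k
      simp [hA, hB, eulerOp_coeff]
    set Q := ∑ j, C (y j) * (f j).map (Int.castRingHom ℚ) with hQ
    have hcol : ∀ i : Fin n, ∑ j, C (y j) • B i j = eulerOp (i : ℕ) Q := by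
      intro i
      ext k
      simp only [hB, hQ, eulerOp_coeff, finsetSum_coeff, Matrix.of_apply, smul_eq_mul,
        coeff_C_mul, Finset.mul_sum]
      refine Finset.sum_congr rfl fun j _ => by ring
    have hdc : ∀ i : Fin n, ∃ g, eulerOp (i : ℕ) Q = (X - C u) ^ v * g := by
      intro i
      refine eulerOp_dvd u i v Q (dvd_trans (pow_dvd_pow _ ?_) hdvd)
      have := i.2
      omega
    choose g hg using hdc
    have h1 := Matrix.det_updateCol_sum B j0 (fun j => C (y j))
    have h2 : (fun k => ∑ i, C (y i) • B k i) = (X - C u) ^ v • g := by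
      funext k
      rw [hcol, hg]; rfl
    rw [h2, Matrix.det_updateCol_smul] at h1
    rw [hWB]
    have h3 : B.det = C (y j0)⁻¹ * (C (y j0) • B.det) := by
      rw [smul_eq_mul, ← mul_assoc, ← C_mul, inv_mul_cancel₀ hy]; simp
    rw [h3, ← h1]
    exact Dvd.intro_left (C (y j0)⁻¹ * (B.updateCol j0 g).det) (by ring)
  -- Gauss
  set L : ℤ[X] := C (u.den : ℤ) * X - C u.num with hL
  have hden : (u.den : ℤ) ≠ 0 := by exact_mod_cast u.den_nz
  have hLprim : L.IsPrimitive := by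
    intro r hr
    rw [C_dvd_iff_dvd_coeff] at hr
    have h0 := hr 0
    have h1 := hr 1
    simp [hL] at h0
    simp only [hL, coeff_sub, coeff_C_mul, coeff_X_one, mul_one, coeff_C_succ, sub_zero] at h1
    have hc : IsCoprime (u.num) (u.den : ℤ) := by
      rw [Int.isCoprime_iff_gcd_eq_one]
      exact u.reduced
    exact hc.isUnit_of_dvd' h0 h1
  have hLmap : L.map (Int.castRingHom ℚ) = C (u.den : ℚ) * (X - C u) := by
    simp only [hL, Polynomial.map_sub, Polynomial.map_mul, map_C, map_X, mul_sub, ← C_mul]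
    congr 2
    simp [Rat.den_mul_eq_num]
  have hLv : (L ^ v).IsPrimitive := by
    clear hdvd hdv
    induction v with
    | zero => rw [pow_zero]; exact isPrimitive_one
    | succ v ih => rw [pow_succ]; exact ih.mul hLprim
  have hLW : L ^ v ∣ W := by
    rw [IsPrimitive.Int.dvd_iff_map_cast_dvd_map_cast _ _ hLv, Polynomial.map_pow,
      hLmap, mul_pow, ← C_pow]
    have hu : IsUnit (C ((u.den : ℚ) ^ v)) := by
      rw [isUnit_C]
      exact (pow_ne_zero _ (by exact_mod_cast u.den_nz)).isUnit
    exact (hu.mul_left_dvd).2 hdv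
  have hlead : L.leadingCoeff = u.den := by
    rw [hL, sub_eq_add_neg, ← C_neg]
    exact leadingCoeff_linear hden
  have hd2 : (u.den : ℤ) ^ v ∣ W.coeff S := by
    have := leadingCoeff_dvd_leadingCoeff hLW
    rw [leadingCoeff_pow, hlead] at this
    rwa [← hWdeg]
  have hle := Int.le_of_dvd (abs_pos.2 hne) ((dvd_abs _ _).2 hd2)
  refine hle.trans ?_
  rw [hcoef, abs_mul, Finset.abs_prod]
  refine mul_le_mul ?_ ?_ (abs_nonneg _) (by positivity)
  · calc ∏ j, |(f j).leadingCoeff| ≤ ∏ j : Fin n, (H : ℤ) :=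
        Finset.prod_le_prod (fun _ _ => abs_nonneg _) (fun j _ => hH j)
      _ = (H : ℤ) ^ n := by simp
  · rw [Matrix.det_vandermonde, Finset.abs_prod]
    calc ∏ i, |∏ j ∈ Finset.Ioi i, (((f j).natDegree : ℤ) - (f i).natDegree)|
        ≤ ∏ i : Fin n, (D : ℤ) ^ n := by
          refine Finset.prod_le_prod (fun _ _ => abs_nonneg _) (fun i _ => ?_)
          rw [Finset.abs_prod]
          calc ∏ j ∈ Finset.Ioi i, |((f j).natDegree : ℤ) - (f i).natDegree|
              ≤ ∏ j ∈ Finset.Ioi i, (D : ℤ) := by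
                refine Finset.prod_le_prod (fun _ _ => abs_nonneg _) (fun j _ => ?_)
                have := hD j
                have := hD i
                rw [abs_le]; constructor <;> omega
            _ = (D : ℤ) ^ (Finset.Ioi i).card := by simp
            _ ≤ (D : ℤ) ^ n := by
                refine pow_le_pow_right₀ (by exact_mod_cast hD1) ?_
                exact (Finset.card_le_univ _).trans (by simp)
      _ = (D : ℤ) ^ (n * n) := by simp [← pow_mul]

/-- Exponent of the first variable attached to the index `(j, i)`. -/
def expo (N M : ℕ) (z : Fin N × Fin M) : ℕ := M * (N - 1 - z.1) + z.2

lemma expo_lt (N M : ℕ) (z : Fin N × Fin M) : expo N M z + M * z.1 < N * M := by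
  obtain ⟨⟨j, hj⟩, ⟨i, hi⟩⟩ := z
  simp only [expo]
  obtain ⟨k, rfl⟩ : ∃ k, N = j + 1 + k := ⟨N - 1 - j, by omega⟩
  have : j + 1 + k - 1 - j = k := by omega
  rw [this]
  nlinarith

lemma expo_ge (N M : ℕ) (z : Fin N × Fin M) : M * (N - 1) ≤ expo N M z + M * z.1 := by
  obtain ⟨⟨j, hj⟩, ⟨i, hi⟩⟩ := z
  simp only [expo]
  obtain ⟨k, rfl⟩ : ∃ k, N = j + 1 + k := ⟨N - 1 - j, by omega⟩
  have h1 : j + 1 + k - 1 - j = k := by omega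
  have h2 : j + 1 + k - 1 = j + k := by omega
  rw [h1, h2]
  nlinarith

lemma siegel_aux (T M : ℕ) (hT : 1 ≤ T) (hM : 1 ≤ M) :
    ∃ c : Fin (2 * T ^ 2) × Fin M → ℤ, c ≠ 0 ∧
      (∀ z, |c z| ≤ 2 ^ (3 * (2 * T ^ 2 * M))) ∧
      ∀ a < T, ∀ b < M * T,
        ∑ z, c z * ((expo (2 * T ^ 2) M z).choose b : ℤ) * ((z.1 : ℕ).choose a : ℤ) = 0 := by
  set N := 2 * T ^ 2 with hN
  have hN1 : 1 ≤ N := by nlinarith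
  let _ := Matrix.seminormedAddCommGroup (m := Fin T × Fin (M * T)) (n := Fin N × Fin M) (α := ℤ)
  let A : Matrix (Fin T × Fin (M * T)) (Fin N × Fin M) ℤ := Matrix.of fun e z =>
    ((expo N M z).choose e.2 : ℤ) * ((z.1 : ℕ).choose e.1 : ℤ)
  have hcα : Fintype.card (Fin T × Fin (M * T)) = T ^ 2 * M := by simp; ring
  have hcβ : Fintype.card (Fin N × Fin M) = N * M := by simp
  have hpos : 0 < T ^ 2 * M := by positivity
  obtain ⟨c, hc0, hAc, hnorm⟩ := Int.Matrix.exists_ne_zero_int_vec_norm_le A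
    (by rw [hcα, hcβ, hN]; nlinarith) (by rw [hcα]; exact hpos)
  refine ⟨c, hc0, ?_, ?_⟩
  · intro z
    have hexp : ((Fintype.card (Fin T × Fin (M * T)) : ℕ) : ℝ) /
        ((Fintype.card (Fin N × Fin M) : ℝ) - (Fintype.card (Fin T × Fin (M * T)) : ℕ)) = 1 := by
      rw [hcα, hcβ, hN]
      push_cast
      have : (0 : ℝ) < (T : ℝ) ^ 2 * M := by exact_mod_cast hpos
      rw [div_eq_one_iff_eq (by nlinarith)]
      ring
    rw [hexp, Real.rpow_one, hcβ] at hnorm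
    have hA : ‖A‖ ≤ 2 ^ (N * M + N) := by
      rw [Matrix.norm_le_iff (by positivity)]
      intro e z
      simp only [A, Matrix.of_apply]
      rw [Int.norm_eq_abs]
      push_cast
      rw [abs_of_nonneg (by positivity), pow_add]
      have h1 : ((expo N M z).choose e.2 : ℝ) ≤ 2 ^ (N * M) := by
        have h := Nat.choose_le_two_pow (expo N M z) e.2
        have h' : 2 ^ (expo N M z) ≤ 2 ^ (N * M) :=
          Nat.pow_le_pow_right (by norm_num) (by have := expo_lt N M z; omega)
        exact_mod_cast h.trans h'
      have h2 : ((z.1 : ℕ).choose e.1 : ℝ) ≤ 2 ^ N := by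
        have h := Nat.choose_le_two_pow (z.1 : ℕ) e.1
        have h' : 2 ^ (z.1 : ℕ) ≤ 2 ^ N :=
          Nat.pow_le_pow_right (by norm_num) z.1.2.le
        exact_mod_cast h.trans h'
      gcongr
    have hmax : max 1 ‖A‖ ≤ 2 ^ (N * M + N) :=
      max_le (one_le_pow₀ (by norm_num)) hA
    have h1 : ‖c z‖ ≤ ‖c‖ := norm_le_pi_norm c z
    have h2 : ((N * M : ℕ) : ℝ) ≤ 2 ^ (N * M) := by
      exact_mod_cast (Nat.lt_two_pow_self (n := N * M)).le
    have h3 : ‖c z‖ ≤ 2 ^ (3 * (N * M)) := by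
      calc ‖c z‖ ≤ ((N * M : ℕ) : ℝ) * max 1 ‖A‖ := h1.trans hnorm
        _ ≤ 2 ^ (N * M) * 2 ^ (N * M + N) := by gcongr
        _ = 2 ^ (N * M + (N * M + N)) := by rw [← pow_add]
        _ ≤ 2 ^ (3 * (N * M)) := by
          apply pow_le_pow_right₀ (by norm_num)
          nlinarith
    rw [Int.norm_eq_abs] at h3
    exact_mod_cast h3
  · intro a ha b hb
    have := congrFun hAc (⟨a, ha⟩, ⟨b, hb⟩)
    simp only [Matrix.mulVec, dotProduct, A, Matrix.of_apply, Pi.zero_apply] at this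
    rw [← this]
    refine Finset.sum_congr rfl fun z _ => by ring

open Polynomial in
lemma nonvanish (N M : ℕ) (hM : 1 ≤ M) (c : Fin N × Fin M → ℤ) (hc : c ≠ 0) (H : ℕ) (hH1 : 1 ≤ H)
    (hH : ∀ z, |c z| ≤ H) (u w : ℚ) (hu : u ≠ 0) (hw : w ≠ 0) (v : ℕ)
    (hv : (H : ℤ) ^ N * ((N * M : ℕ) : ℤ) ^ (N * N) < (u.den : ℤ) ^ v) :
    ∃ b < v + N, ∑ z, (c z : ℚ) * ((expo N M z).choose b : ℚ) * u ^ (expo N M z) * w ^ (z.1 : ℕ)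
      ≠ 0 := by
  classical
  by_contra hcon
  push Not at hcon
  obtain ⟨⟨j0, i0⟩, hz0⟩ := Function.ne_iff.1 hc
  let P : Fin N → ℤ[X] := fun j => ∑ i : Fin M, monomial (expo N M (j, i)) (c (j, i))
  have hPc : ∀ j i, (P j).coeff (expo N M (j, i)) = c (j, i) := by
    intro j i
    simp only [P, finsetSum_coeff, coeff_monomial]
    rw [Finset.sum_eq_single i]
    · simp
    · intro i' _ hne
      rw [if_neg]
      simp only [expo]
      intro h
      apply hne
      ext
      omega
    · simp
  have hP0 : ∀ j n, (P j).coeff n ≠ 0 → ∃ i, n = expo N M (j, i) := by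
    intro j n hn
    by_contra hno
    push Not at hno
    apply hn
    simp only [P, finsetSum_coeff, coeff_monomial]
    refine Finset.sum_eq_zero fun i _ => ?_
    rw [if_neg]
    exact fun h => hno i h.symm
  let f : Fin N → ℤ[X] := fun j => if P j = 0 then X ^ (M * (N - 1 - j)) else P j
  have hf : ∀ j, f j ≠ 0 := by
    intro j
    simp only [f]
    split_ifs with h
    · exact pow_ne_zero _ X_ne_zero
    · exact h
  have hfdeg : ∀ j, ∃ i, i < M ∧ (f j).natDegree = M * (N - 1 - j) + i ∧
      |(f j).leadingCoeff| ≤ H := by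
    intro j
    simp only [f]
    split_ifs with h
    · refine ⟨0, hM, by simp, ?_⟩
      simp only [leadingCoeff_X_pow, abs_one]
      exact_mod_cast hH1
    · obtain ⟨i, hi⟩ := hP0 j (P j).natDegree (leadingCoeff_ne_zero.2 h)
      refine ⟨i, i.2, hi, ?_⟩
      rw [leadingCoeff, hi, hPc]
      exact hH _
  have hinj : Function.Injective (fun j => (f j).natDegree) := by
    intro j j' hjj
    obtain ⟨i, hi, h1, -⟩ := hfdeg j
    obtain ⟨i', hi', h1', -⟩ := hfdeg j'
    simp only [h1, h1'] at hjj
    have e1 : (M * (N - 1 - (j : ℕ)) + i) / M = N - 1 - j := by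
      rw [Nat.mul_add_div (by omega), Nat.div_eq_of_lt hi, add_zero]
    have e2 : (M * (N - 1 - (j' : ℕ)) + i') / M = N - 1 - j' := by
      rw [Nat.mul_add_div (by omega), Nat.div_eq_of_lt hi', add_zero]
    rw [hjj, e2] at e1
    ext
    have := j.2
    have := j'.2
    omega
  let y : Fin N → ℚ := fun j => if P j = 0 then 0 else w ^ (j : ℕ)
  have hPj0 : P j0 ≠ 0 := by
    intro h
    apply hz0
    have := hPc j0 i0
    rw [h] at this
    simpa using this.symm
  have hy : y j0 ≠ 0 := by
    simp only [y, if_neg hPj0]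
    exact pow_ne_zero _ hw
  have hQ : ∑ j, C (y j) * (f j).map (Int.castRingHom ℚ) =
      ∑ z : Fin N × Fin M, monomial (expo N M z) ((c z : ℚ) * w ^ (z.1 : ℕ)) := by
    rw [Fintype.sum_prod_type]
    refine Finset.sum_congr rfl fun j _ => ?_
    have : C (y j) * (f j).map (Int.castRingHom ℚ) =
        C (w ^ (j : ℕ)) * (P j).map (Int.castRingHom ℚ) := by
      simp only [y, f]
      split_ifs with h
      · rw [h]; simp
      · rfl
    rw [this]
    simp only [P, Polynomial.map_sum, Finset.mul_sum, map_monomial, C_mul_monomial]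
    refine Finset.sum_congr rfl fun i _ => ?_
    simp [mul_comm]
  have hle := wronskian_bound f hf hinj H (N * M)
    (Nat.mul_pos (Fin.pos j0) hM) (fun j => (hfdeg j).choose_spec.2.2)
    (fun j => by
      obtain ⟨i, hi, h1, -⟩ := hfdeg j
      have := expo_lt N M (j, ⟨i, hi⟩)
      simp only [expo] at this
      omega) y j0 hy u v (by
    rw [hQ, X_sub_C_pow_dvd_iff, ← taylor_apply, X_pow_dvd_iff]
    intro b hb
    rw [taylor_coeff]
    have h1 := hcon b hb
    have h2 : u ^ b * (hasseDeriv b (∑ z : Fin N × Fin M,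
        monomial (expo N M z) ((c z : ℚ) * w ^ (z.1 : ℕ)))).eval u = 0 := by
      rw [← h1, map_sum, eval_finsetSum, Finset.mul_sum]
      refine Finset.sum_congr rfl fun z _ => ?_
      rw [hasseDeriv_monomial, eval_monomial]
      rcases le_or_gt b (expo N M z) with h | h
      · rw [← Nat.sub_add_cancel h, pow_add, Nat.sub_add_cancel h]
        ring
      · rw [Nat.choose_eq_zero_of_lt h]; simp
    exact (mul_eq_zero.1 h2).resolve_left (pow_ne_zero _ hu))
  exact absurd hle (not_le.2 hv)

lemma pow_choose_expand (D i b : ℕ) (hi : i < D) (x : ℝ) :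
    (i.choose b : ℝ) * x ^ i = x ^ b * ∑ β ∈ Finset.range D,
      ((β + b).choose b : ℝ) * (i.choose (β + b) : ℝ) * (x - 1) ^ β := by
  rcases le_or_gt b i with h | h
  · have h1 : x ^ i = x ^ b * x ^ (i - b) := by rw [← pow_add]; congr 1; omega
    have h2 : x ^ (i - b) = ∑ β ∈ Finset.range D, ((i - b).choose β : ℝ) * (x - 1) ^ β := by
      have h3 : x ^ (i - b) = ((x - 1) + 1) ^ (i - b) := by ring
      rw [h3, add_pow]
      have h5 : Finset.range (i - b + 1) ⊆ Finset.range D :=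
        Finset.range_subset_range.2 (by omega)
      rw [← Finset.sum_subset h5 (f := fun β => ((i - b).choose β : ℝ) * (x - 1) ^ β)]
      · refine Finset.sum_congr rfl fun β _ => by simp [mul_comm]
      · intro β _ hβ
        rw [Nat.choose_eq_zero_of_lt (by simpa using hβ)]
        simp
    rw [h1, h2, mul_left_comm, Finset.mul_sum]
    congr 1
    refine Finset.sum_congr rfl fun β _ => ?_
    rw [← mul_assoc]
    congr 1
    rcases le_or_gt (β + b) i with h4 | h4
    · have := Nat.choose_mul (n := i) (Nat.le_add_left b β)
      rw [Nat.add_sub_cancel] at this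
      rw [mul_comm ((β + b).choose b : ℝ)]
      exact_mod_cast this.symm
    · rw [Nat.choose_eq_zero_of_lt h4, Nat.choose_eq_zero_of_lt (show i - b < β by omega)]
      simp
  · rw [Nat.choose_eq_zero_of_lt h]
    simp only [Nat.cast_zero, zero_mul]
    symm
    rw [Finset.sum_eq_zero, mul_zero]
    intro β _
    rw [Nat.choose_eq_zero_of_lt (show i < β + b by omega)]
    simp

lemma pow_expand (D j : ℕ) (hj : j < D) (x : ℝ) :
    x ^ j = ∑ a ∈ Finset.range D, (j.choose a : ℝ) * (x - 1) ^ a := by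
  have := pow_choose_expand D j 0 hj x
  simpa using this

lemma upper_bound (N M T : ℕ) (hM : 1 ≤ M) (c : Fin N × Fin M → ℤ)
    (hH : ∀ z, |c z| ≤ 2 ^ (3 * (N * M)))
    (hvan : ∀ a < T, ∀ b < M * T,
        ∑ z, c z * ((expo N M z).choose b : ℤ) * ((z.1 : ℕ).choose a : ℤ) = 0)
    (x y : ℝ) (hx : |x - 1| ≤ 1) (hy : |y - 1| ≤ 1) (b : ℕ) (hb : b ≤ N * M)
    (E : ℝ) (hE : 0 ≤ E) (h1 : |x - 1| ^ (M * T - b) ≤ E) (h2 : |y - 1| ^ T ≤ E) :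
    |∑ z, (c z : ℝ) * ((expo N M z).choose b : ℝ) * x ^ (expo N M z) * y ^ (z.1 : ℕ)|
      ≤ 2 ^ (11 * (N * M)) * E := by
  set D := N * M with hD
  have hND : N ≤ D := by rw [hD]; nlinarith
  set g : ℕ → ℕ → ℤ := fun a b =>
    ∑ z, c z * ((expo N M z).choose b : ℤ) * ((z.1 : ℕ).choose a : ℤ) with hg
  have hex : ∀ z, expo N M z < D := fun z => by have := expo_lt N M z; omega
  have key : ∑ z, (c z : ℝ) * ((expo N M z).choose b : ℝ) * x ^ (expo N M z) * y ^ (z.1 : ℕ)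
      = x ^ b * ∑ β ∈ Finset.range D, ∑ a ∈ Finset.range N,
        ((β + b).choose b : ℝ) * (g a (β + b) : ℝ) * ((x - 1) ^ β * (y - 1) ^ a) := by
    have e1 : ∀ z : Fin N × Fin M,
        (c z : ℝ) * ((expo N M z).choose b : ℝ) * x ^ (expo N M z) * y ^ (z.1 : ℕ) =
        x ^ b * ∑ β ∈ Finset.range D, ∑ a ∈ Finset.range N,
          ((β + b).choose b : ℝ) * ((c z : ℝ) * ((expo N M z).choose (β + b) : ℝ) *
            ((z.1 : ℕ).choose a : ℝ)) * ((x - 1) ^ β * (y - 1) ^ a) := by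
      intro z
      rw [mul_assoc (c z : ℝ), pow_choose_expand D _ b (hex z) x, pow_expand N z.1 z.1.2 y]
      rw [mul_left_comm, mul_assoc (x ^ b), mul_assoc (c z : ℝ), Finset.sum_mul_sum,
        Finset.mul_sum]
      congr 1
      refine Finset.sum_congr rfl fun β _ => ?_
      rw [Finset.mul_sum]
      refine Finset.sum_congr rfl fun a _ => ?_
      ring
    rw [Finset.sum_congr rfl fun z _ => e1 z, ← Finset.mul_sum, Finset.sum_comm]
    congr 1
    refine Finset.sum_congr rfl fun β _ => ?_
    rw [Finset.sum_comm]
    refine Finset.sum_congr rfl fun a _ => ?_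
    rw [← Finset.sum_mul, ← Finset.mul_sum]
    congr 2
    simp only [hg]
    push_cast
    rfl
  have hDpow : (D : ℝ) ≤ 2 ^ D := by exact_mod_cast (Nat.lt_two_pow_self (n := D)).le
  have hNpow : (N : ℝ) ≤ 2 ^ D := by
    refine le_trans ?_ hDpow
    exact_mod_cast hND
  have hgb : ∀ a b, |(g a b : ℝ)| ≤ 2 ^ (6 * D) := by
    intro a b
    simp only [hg]
    push_cast
    calc |∑ z, (c z : ℝ) * ((expo N M z).choose b : ℝ) * ((z.1 : ℕ).choose a : ℝ)|
        ≤ ∑ z, |(c z : ℝ) * ((expo N M z).choose b : ℝ) * ((z.1 : ℕ).choose a : ℝ)| :=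
          Finset.abs_sum_le_sum_abs _ _
      _ ≤ ∑ z : Fin N × Fin M, (2 : ℝ) ^ (3 * D) * 2 ^ D * 2 ^ D := by
          refine Finset.sum_le_sum fun z _ => ?_
          rw [abs_mul, abs_mul, Nat.abs_cast, Nat.abs_cast]
          have k1 : |(c z : ℝ)| ≤ 2 ^ (3 * D) := by exact_mod_cast hH z
          have k2 : ((expo N M z).choose b : ℝ) ≤ 2 ^ D := by
            have h := Nat.choose_le_two_pow (expo N M z) b
            have h' : 2 ^ (expo N M z) ≤ 2 ^ D :=
              Nat.pow_le_pow_right (by norm_num) (hex z).le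
            exact_mod_cast h.trans h'
          have k3 : ((z.1 : ℕ).choose a : ℝ) ≤ 2 ^ D := by
            have h := Nat.choose_le_two_pow (z.1 : ℕ) a
            have h' : 2 ^ (z.1 : ℕ) ≤ 2 ^ D :=
              Nat.pow_le_pow_right (by norm_num) (z.1.2.le.trans hND)
            exact_mod_cast h.trans h'
          gcongr
      _ = (D : ℝ) * (2 ^ (3 * D) * 2 ^ D * 2 ^ D) := by
          simp [hD]
      _ ≤ 2 ^ D * (2 ^ (3 * D) * 2 ^ D * 2 ^ D) := by gcongr
      _ = 2 ^ (6 * D) := by ring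
  rw [key, abs_mul, abs_pow]
  have hx2 : |x| ≤ 2 := by
    have : |x| ≤ |x - 1| + 1 := by
      have := abs_add_le (x - 1) 1
      simpa using this
    linarith
  have hxb : |x| ^ b ≤ 2 ^ D :=
    (pow_le_pow_left₀ (abs_nonneg _) hx2 b).trans (pow_le_pow_right₀ (by norm_num) hb)
  have hterm : ∀ β ∈ Finset.range D, ∀ a ∈ Finset.range N,
      |((β + b).choose b : ℝ) * (g a (β + b) : ℝ) * ((x - 1) ^ β * (y - 1) ^ a)|
        ≤ 2 ^ (8 * D) * E := by
    intro β hβ a ha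
    rw [Finset.mem_range] at hβ ha
    by_cases hlow : a < T ∧ β + b < M * T
    · have : g a (β + b) = 0 := hvan a hlow.1 _ hlow.2
      rw [this]
      simp only [Int.cast_zero, mul_zero, zero_mul, abs_zero]
      positivity
    · have hsm : |x - 1| ^ β * |y - 1| ^ a ≤ E := by
        rcases le_or_gt T a with h | h
        · calc |x - 1| ^ β * |y - 1| ^ a ≤ 1 * |y - 1| ^ T := by
                refine mul_le_mul (pow_le_one₀ (abs_nonneg _) hx)
                  (pow_le_pow_of_le_one (abs_nonneg _) hy h) (by positivity) (by norm_num)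
            _ ≤ E := by rw [one_mul]; exact h2
        · have hβ2 : M * T - b ≤ β := by
            by_contra hh
            exact hlow ⟨h, by omega⟩
          calc |x - 1| ^ β * |y - 1| ^ a ≤ |x - 1| ^ (M * T - b) * 1 := by
                refine mul_le_mul (pow_le_pow_of_le_one (abs_nonneg _) hx hβ2)
                  (pow_le_one₀ (abs_nonneg _) hy) (by positivity) (by positivity)
            _ ≤ E := by rw [mul_one]; exact h1
      rw [abs_mul, abs_mul, abs_mul, abs_pow, abs_pow, Nat.abs_cast]
      have k1 : ((β + b).choose b : ℝ) ≤ 2 ^ (2 * D) := by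
        have h := Nat.choose_le_two_pow (β + b) b
        have h' : 2 ^ (β + b) ≤ 2 ^ (2 * D) :=
          Nat.pow_le_pow_right (by norm_num) (by omega)
        exact_mod_cast h.trans h'
      calc ((β + b).choose b : ℝ) * |(g a (β + b) : ℝ)| * (|x - 1| ^ β * |y - 1| ^ a)
          ≤ 2 ^ (2 * D) * 2 ^ (6 * D) * E := by
            have := hgb a (β + b)
            gcongr
        _ = 2 ^ (8 * D) * E := by ring
  have hsum : |∑ β ∈ Finset.range D, ∑ a ∈ Finset.range N,
        ((β + b).choose b : ℝ) * (g a (β + b) : ℝ) * ((x - 1) ^ β * (y - 1) ^ a)|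
        ≤ (D : ℝ) * ((N : ℝ) * (2 ^ (8 * D) * E)) := by
    calc _ ≤ ∑ β ∈ Finset.range D, |∑ a ∈ Finset.range N,
        ((β + b).choose b : ℝ) * (g a (β + b) : ℝ) * ((x - 1) ^ β * (y - 1) ^ a)| :=
          Finset.abs_sum_le_sum_abs _ _
      _ ≤ ∑ β ∈ Finset.range D, ∑ a ∈ Finset.range N, (2 ^ (8 * D) * E) := by
          refine Finset.sum_le_sum fun β hβ => (Finset.abs_sum_le_sum_abs _ _).trans ?_
          exact Finset.sum_le_sum fun a ha => hterm β hβ a ha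
      _ = _ := by simp
  calc |x| ^ b * _ ≤ 2 ^ D * ((D : ℝ) * ((N : ℝ) * (2 ^ (8 * D) * E))) := by gcongr
    _ ≤ 2 ^ D * (2 ^ D * (2 ^ D * (2 ^ (8 * D) * E))) := by gcongr
    _ = 2 ^ (11 * D) * E := by ring

lemma exists_pow_threshold (p : ℕ) (hp : 2 ≤ p) (Z : ℝ) :
    ∃ e : ℕ, Z ≤ (p : ℝ) ^ e ∧ ∀ t : ℕ, Z ≤ (p : ℝ) ^ t → p ^ e ∣ p ^ t := by
  classical
  have hex : ∃ e : ℕ, Z ≤ (p : ℝ) ^ e := by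
    obtain ⟨e, he⟩ := pow_unbounded_of_one_lt Z (show (1 : ℝ) < p by exact_mod_cast hp)
    exact ⟨e, he.le⟩
  exact ⟨Nat.find hex, Nat.find_spec hex, fun t ht => pow_dvd_pow p (Nat.find_min' hex ht)⟩

/-- A pair `a`, `b` of close integers that are almost a power of `p`, resp. `q`. -/
structure Near (p q : ℕ) (c δ h : ℝ) (a b n m : ℕ) : Prop where
  ha : 0 < a
  hb : 0 < b
  hpa : p ^ n ∣ a
  hqb : q ^ m ∣ b
  ha_le : (a : ℝ) ≤ Real.exp h
  hb_le : (b : ℝ) ≤ Real.exp h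
  hp_le : Real.exp ((1 - δ) * h) ≤ (p : ℝ) ^ n
  hq_le : Real.exp ((1 - δ) * h) ≤ (q : ℝ) ^ m
  close : |(a : ℝ) / b - 1| ≤ Real.exp (-(c * h))

lemma Near.den_ge {p q : ℕ} (hp : p.Prime) (hq : q.Prime) (hpq : p ≠ q) {c δ h : ℝ}
    {a b n m : ℕ} (H : Near p q c δ h a b n m) :
    Real.exp ((1 - 2 * δ) * h) ≤ (((a : ℚ) / b).den : ℝ) := by
  obtain ⟨A, hA⟩ := H.hpa
  set u : ℚ := (a : ℚ) / b with hu
  have hb0 : (b : ℚ) ≠ 0 := by exact_mod_cast H.hb.ne'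
  have h1 : (a : ℚ) * u.den = u.num * b := by
    have h2 := Rat.mul_den_eq_num u
    have h3 : u * b = a := by rw [hu]; field_simp
    calc (a : ℚ) * u.den = (u * u.den) * b := by rw [← h3]; ring
      _ = u.num * b := by rw [h2]
  have h2 : (a : ℤ) * u.den = u.num * b := by exact_mod_cast h1
  have h3 : ((q ^ m : ℕ) : ℤ) ∣ ((a * u.den : ℕ) : ℤ) := by
    push_cast
    rw [h2]
    exact Dvd.dvd.mul_left (by exact_mod_cast H.hqb) _
  have h4 : q ^ m ∣ a * u.den := by exact_mod_cast h3
  rw [hA, mul_assoc] at h4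
  have hcop : Nat.Coprime (q ^ m) (p ^ n) :=
    Nat.Coprime.pow _ _ ((Nat.coprime_primes hq hp).2 hpq.symm)
  have h5 := hcop.dvd_of_dvd_mul_left h4
  have hApos : 0 < A := by
    rcases Nat.eq_zero_or_pos A with h | h
    · have := H.ha
      rw [hA, h] at this
      simp at this
    · exact h
  have h6 : q ^ m ≤ A * u.den := Nat.le_of_dvd (Nat.mul_pos hApos u.den_pos) h5
  have h7 : (q : ℝ) ^ m ≤ A * u.den := by exact_mod_cast h6
  have hAle : (A : ℝ) ≤ Real.exp (δ * h) := by
    have k1 : ((p : ℝ) ^ n) * A ≤ Real.exp h := by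
      have := H.ha_le
      rw [hA] at this
      exact_mod_cast this
    have k2 : Real.exp ((1 - δ) * h) * A ≤ Real.exp h :=
      (mul_le_mul_of_nonneg_right H.hp_le (by positivity)).trans k1
    have k3 : Real.exp h = Real.exp ((1 - δ) * h) * Real.exp (δ * h) := by
      rw [← Real.exp_add]; congr 1; ring
    rw [k3] at k2
    exact le_of_mul_le_mul_left k2 (Real.exp_pos _)
  have h8 : Real.exp ((1 - δ) * h) ≤ Real.exp (δ * h) * u.den :=
    H.hq_le.trans (h7.trans (by gcongr))
  have h9 : Real.exp ((1 - δ) * h) = Real.exp (δ * h) * Real.exp ((1 - 2 * δ) * h) := by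
    rw [← Real.exp_add]; congr 1; ring
  rw [h9] at h8
  exact le_of_mul_le_mul_left h8 (Real.exp_pos _)

lemma lower_bound {p q : ℕ} (hp : p.Prime) (hq : q.Prime) {c δ h₁ h₂ : ℝ}
    (hδ : δ ≤ 1) (hh : 0 ≤ h₁)
    {a₁ b₁ n₁ m₁ a₂ b₂ n₂ m₂ : ℕ} (H₁ : Near p q c δ h₁ a₁ b₁ n₁ m₁)
    (H₂ : Near p q c δ h₂ a₂ b₂ n₂ m₂) (N M : ℕ) (hMh : M * h₁ ≤ h₂)
    (co : Fin N × Fin M → ℤ) (b : ℕ)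
    (hS : ∑ z, (co z : ℝ) * ((expo N M z).choose b : ℝ) * ((a₁ : ℝ) / b₁) ^ (expo N M z) *
      ((a₂ : ℝ) / b₂) ^ (z.1 : ℕ) ≠ 0) :
    Real.exp (2 * ((1 - δ) * (M * (N - 1 : ℕ) * h₁))) ≤
      (b₁ : ℝ) ^ (N * M) * (b₂ : ℝ) ^ (N - 1) *
      |∑ z, (co z : ℝ) * ((expo N M z).choose b : ℝ) * ((a₁ : ℝ) / b₁) ^ (expo N M z) *
      ((a₂ : ℝ) / b₂) ^ (z.1 : ℕ)| := by
  set S := ∑ z, (co z : ℝ) * ((expo N M z).choose b : ℝ) * ((a₁ : ℝ) / b₁) ^ (expo N M z) *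
      ((a₂ : ℝ) / b₂) ^ (z.1 : ℕ) with hSdef
  set I : ℤ := ∑ z : Fin N × Fin M, co z * ((expo N M z).choose b : ℤ) *
    (((a₁ ^ (expo N M z) * a₂ ^ (z.1 : ℕ)) *
      (b₁ ^ (N * M - expo N M z) * b₂ ^ (N - 1 - z.1) : ℕ) : ℕ) : ℤ) with hI
  have hb1 : (b₁ : ℝ) ≠ 0 := by exact_mod_cast H₁.hb.ne'
  have hb2 : (b₂ : ℝ) ≠ 0 := by exact_mod_cast H₂.hb.ne'
  have hIS : (I : ℝ) = (b₁ : ℝ) ^ (N * M) * (b₂ : ℝ) ^ (N - 1) * S := by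
    rw [hI, hSdef, Finset.mul_sum]
    push_cast
    refine Finset.sum_congr rfl fun z _ => ?_
    have e1 : (b₁ : ℝ) ^ (N * M) = (b₁ : ℝ) ^ (N * M - expo N M z) * (b₁ : ℝ) ^ (expo N M z) := by
      rw [← pow_add]; congr 1
      have := expo_lt N M z
      omega
    have e2 : (b₂ : ℝ) ^ (N - 1) = (b₂ : ℝ) ^ (N - 1 - z.1) * (b₂ : ℝ) ^ (z.1 : ℕ) := by
      rw [← pow_add]; congr 1
      have := z.1.2
      omega
    rw [e1, e2, div_pow, div_pow]
    field_simp
  have hI0 : I ≠ 0 := by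
    intro h
    rw [h] at hIS
    have : (b₁ : ℝ) ^ (N * M) * (b₂ : ℝ) ^ (N - 1) * S ≠ 0 := by positivity
    exact this (by rw [← hIS]; simp)
  set Z := Real.exp ((1 - δ) * (M * (N - 1 : ℕ) * h₁)) with hZ
  have hd : 0 ≤ 1 - δ := by linarith
  obtain ⟨e, he, hediv⟩ := exists_pow_threshold p hp.two_le Z
  obtain ⟨f, hf, hfdiv⟩ := exists_pow_threshold q hq.two_le Z
  have hpow : ∀ (r : ℕ) (k l i j : ℕ), Real.exp ((1 - δ) * h₁) ≤ (r : ℝ) ^ k →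
      Real.exp ((1 - δ) * h₂) ≤ (r : ℝ) ^ l → M * (N - 1) ≤ i + M * j →
      Z ≤ (r : ℝ) ^ (k * i + l * j) := by
    intro r k l i j h1 h2 hij
    have hij' : (M : ℝ) * (N - 1 : ℕ) ≤ i + M * j := by exact_mod_cast hij
    calc Z ≤ Real.exp ((1 - δ) * (i * h₁ + j * h₂)) := by
          rw [hZ]
          apply Real.exp_le_exp.2
          apply mul_le_mul_of_nonneg_left _ hd
          have k1 : (j : ℝ) * (M * h₁) ≤ j * h₂ := mul_le_mul_of_nonneg_left hMh (by positivity)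
          have k2 := mul_le_mul_of_nonneg_right hij' hh
          nlinarith
      _ = Real.exp ((1 - δ) * h₁) ^ i * Real.exp ((1 - δ) * h₂) ^ j := by
          rw [← Real.exp_nat_mul, ← Real.exp_nat_mul, ← Real.exp_add]
          congr 1; ring
      _ ≤ ((r : ℝ) ^ k) ^ i * ((r : ℝ) ^ l) ^ j := by gcongr
      _ = (r : ℝ) ^ (k * i + l * j) := by rw [pow_add, pow_mul, pow_mul]
  have hdiv : (p ^ e * q ^ f : ℕ) ∣ I.natAbs := by
    rw [← Int.natCast_dvd]
    refine Finset.dvd_sum fun z _ => Dvd.dvd.mul_left ?_ _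
    rw [Int.natCast_dvd_natCast]
    refine mul_dvd_mul ?_ ?_
    · have h1 := hpow p n₁ n₂ (expo N M z) z.1 H₁.hp_le H₂.hp_le (expo_ge N M z)
      refine (hediv _ h1).trans ?_
      rw [pow_add, pow_mul, pow_mul]
      exact mul_dvd_mul (pow_dvd_pow_of_dvd H₁.hpa _) (pow_dvd_pow_of_dvd H₂.hpa _)
    · have hle : M * (N - 1) ≤ (N * M - expo N M z) + M * (N - 1 - z.1) := by
        have k1 := expo_lt N M z
        have k2 : M * (N - 1 - z.1) + M * z.1 = M * (N - 1) := by
          rw [← Nat.mul_add]; congr 1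
          have := z.1.2
          omega
        omega
      have h1 := hpow q m₁ m₂ _ _ H₁.hq_le H₂.hq_le hle
      refine (hfdiv _ h1).trans ?_
      rw [pow_add, pow_mul, pow_mul]
      exact mul_dvd_mul (pow_dvd_pow_of_dvd H₁.hqb _) (pow_dvd_pow_of_dvd H₂.hqb _)
  have hle := Nat.le_of_dvd (Int.natAbs_pos.2 hI0) hdiv
  have hle' : (p : ℝ) ^ e * (q : ℝ) ^ f ≤ |(I : ℝ)| := by
    have : ((p ^ e * q ^ f : ℕ) : ℝ) ≤ ((I.natAbs : ℕ) : ℝ) := by exact_mod_cast hle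
    rw [Nat.cast_natAbs] at this
    push_cast at this
    exact this
  calc Real.exp (2 * ((1 - δ) * (M * (N - 1 : ℕ) * h₁))) = Z * Z := by
        rw [hZ, ← Real.exp_add]; congr 1; ring
    _ ≤ (p : ℝ) ^ e * (q : ℝ) ^ f :=
        mul_le_mul he hf (Real.exp_pos _).le (by positivity)
    _ ≤ |(I : ℝ)| := hle'
    _ = _ := by
        rw [hIS, abs_mul, abs_of_nonneg (by positivity)]

lemma two_pow_le_exp (n : ℕ) : (2 : ℝ) ^ n ≤ Real.exp n := by
  have h2 : (2 : ℝ) ≤ Real.exp 1 := by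
    have := Real.add_one_le_exp 1
    linarith
  calc (2 : ℝ) ^ n ≤ Real.exp 1 ^ n := by gcongr
    _ = Real.exp n := by rw [← Real.exp_nat_mul, mul_one]

set_option maxHeartbeats 2000000 in
theorem no_two {p q : ℕ} (hp : p.Prime) (hq : q.Prime) (hpq : p ≠ q) (T N : ℕ) (hT : 1 ≤ T)
    (hN : N = 2 * T ^ 2) (c δ : ℝ) (hc : c = 4 / T) (hδ : δ = 1 / (4 * N)) {h₁ h₂ : ℝ}
    (hh₁ : 300 * (N : ℝ) ^ 3 ≤ h₁) (hh₂ : (16 * N + 1) * h₁ ≤ h₂)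
    {a₁ b₁ n₁ m₁ a₂ b₂ n₂ m₂ : ℕ} (H₁ : Near p q c δ h₁ a₁ b₁ n₁ m₁)
    (H₂ : Near p q c δ h₂ a₂ b₂ n₂ m₂) : False := by
  have hN2 : 2 ≤ N := by rw [hN]; nlinarith
  have hNr : (2 : ℝ) ≤ N := by exact_mod_cast hN2
  have hTr : (1 : ℝ) ≤ T := by exact_mod_cast hT
  have hcT : c * T = 4 := by rw [hc]; field_simp
  have hc0 : 0 < c := by rw [hc]; positivity
  have hc4 : c ≤ 4 := by
    rw [hc]
    exact div_le_self (by norm_num) hTr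
  have hδN : δ * N = 1 / 4 := by rw [hδ]; field_simp
  have hδ0 : 0 < δ := by rw [hδ]; positivity
  have hδ4 : δ ≤ 1 / 8 := by nlinarith
  have hN3 : (N : ℝ) ≤ (N : ℝ) ^ 3 := le_self_pow₀ (by linarith) (by norm_num)
  have hh0 : 0 < h₁ := by nlinarith
  set M := ⌊h₂ / h₁⌋₊ with hMdef
  have hh20 : 0 ≤ h₂ / h₁ := by
    apply div_nonneg _ hh0.le
    nlinarith
  have hM1 : (M : ℝ) * h₁ ≤ h₂ := by
    have := Nat.floor_le hh20
    rwa [le_div_iff₀ hh0] at this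
  have hM2 : h₂ < ((M : ℝ) + 1) * h₁ := by
    have := Nat.lt_floor_add_one (h₂ / h₁)
    rwa [div_lt_iff₀ hh0] at this
  have hM16 : 16 * N ≤ M := by
    apply Nat.le_floor
    rw [le_div_iff₀ hh0]
    push_cast
    nlinarith
  have hM16r : 16 * (N : ℝ) ≤ M := by exact_mod_cast hM16
  have hMpos : 1 ≤ M := by omega
  have hMr : (0 : ℝ) < M := by exact_mod_cast hMpos
  have hsieg := siegel_aux T M hT hMpos
  rw [← hN] at hsieg
  obtain ⟨co, hco0, hcoH, hvan⟩ := hsieg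
  -- the two rational points
  set u : ℚ := (a₁ : ℚ) / b₁ with hu
  set w : ℚ := (a₂ : ℚ) / b₂ with hw
  have hu0 : u ≠ 0 :=
    div_ne_zero (by exact_mod_cast H₁.ha.ne') (by exact_mod_cast H₁.hb.ne')
  have hw0 : w ≠ 0 :=
    div_ne_zero (by exact_mod_cast H₂.ha.ne') (by exact_mod_cast H₂.hb.ne')
  set v := M / 16 with hv
  have hvr : (M : ℝ) / 32 ≤ v := by
    have h1 : M ≤ 32 * v := by omega
    have h2 : (M : ℝ) ≤ 32 * v := by exact_mod_cast h1
    linarith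
  have hden : Real.exp (h₁ / 2) ≤ (u.den : ℝ) := by
    refine le_trans (Real.exp_le_exp.2 ?_) (H₁.den_ge hp hq hpq)
    nlinarith
  have hbig : (((2 ^ (3 * (N * M)) : ℕ) : ℤ)) ^ N * ((N * M : ℕ) : ℤ) ^ (N * N)
      < (u.den : ℤ) ^ v := by
    have hr : (((2 : ℝ) ^ (3 * (N * M)))) ^ N * ((N * M : ℕ) : ℝ) ^ (N * N)
      < (u.den : ℝ) ^ v := by
      have hDpow : ((N * M : ℕ) : ℝ) ≤ 2 ^ (N * M) := by
        exact_mod_cast (Nat.lt_two_pow_self (n := N * M)).le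
      calc (((2 : ℝ) ^ (3 * (N * M)))) ^ N * ((N * M : ℕ) : ℝ) ^ (N * N)
          ≤ (((2 : ℝ) ^ (3 * (N * M)))) ^ N * (2 ^ (N * M)) ^ (N * N) := by gcongr
        _ = 2 ^ (3 * (N * M) * N + N * M * (N * N)) := by
            rw [← pow_mul, ← pow_mul, ← pow_add]
        _ ≤ Real.exp ((3 * (N * M) * N + N * M * (N * N) : ℕ) : ℝ) := two_pow_le_exp _
        _ < Real.exp (v * (h₁ / 2)) := by
            apply Real.exp_lt_exp.2
            push_cast
            have e1 : (N : ℝ) ^ 2 ≤ (N : ℝ) ^ 3 := pow_le_pow_right₀ (by linarith) (by norm_num)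
            have e2 : (M : ℝ) * (N : ℝ) ^ 2 ≤ M * (N : ℝ) ^ 3 :=
              mul_le_mul_of_nonneg_left e1 hMr.le
            have e3 : (M : ℝ) / 32 * (h₁ / 2) ≤ v * (h₁ / 2) :=
              mul_le_mul_of_nonneg_right hvr (by linarith)
            have e4 : (M : ℝ) * (300 * (N : ℝ) ^ 3) ≤ M * h₁ :=
              mul_le_mul_of_nonneg_left hh₁ hMr.le
            have e5 : 0 < (M : ℝ) * (N : ℝ) ^ 3 := by positivity
            nlinarith
        _ = Real.exp (h₁ / 2) ^ v := by rw [← Real.exp_nat_mul]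
        _ ≤ (u.den : ℝ) ^ v := by gcongr
    exact_mod_cast hr
  obtain ⟨b, hb, hSb⟩ := nonvanish N M hMpos co hco0 (2 ^ (3 * (N * M)))
    Nat.one_le_two_pow (fun z => by exact_mod_cast hcoH z) u w hu0 hw0 v hbig
  have hb8 : 8 * b ≤ M := by omega
  have hb8r : (b : ℝ) ≤ M / 8 := by
    have : (8 : ℝ) * b ≤ M := by exact_mod_cast hb8
    linarith
  have hSr : ∑ z, (co z : ℝ) * ((expo N M z).choose b : ℝ) * ((a₁ : ℝ) / b₁) ^ (expo N M z) *
      ((a₂ : ℝ) / b₂) ^ (z.1 : ℕ) ≠ 0 := by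
    intro h
    apply hSb
    rw [hu, hw]
    have h' : ((∑ z, (co z : ℚ) * ((expo N M z).choose b : ℚ) * ((a₁ : ℚ) / b₁) ^ (expo N M z) *
      ((a₂ : ℚ) / b₂) ^ (z.1 : ℕ) : ℚ) : ℝ) = 0 := by
      push_cast
      exact h
    exact_mod_cast h'
  have hlow := lower_bound hp hq (by linarith) hh0.le H₁ H₂ N M hM1 co b hSr
  -- upper bound
  have hbMT : b ≤ M * T := by nlinarith
  set E := Real.exp (-(c * h₁ * (M * T - b))) with hE
  have hx1 : |(a₁ : ℝ) / b₁ - 1| ≤ 1 := by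
    refine H₁.close.trans ?_
    rw [Real.exp_le_one_iff]
    have := mul_pos hc0 hh0
    linarith
  have hh2pos : 0 < h₂ := by nlinarith
  have hy1 : |(a₂ : ℝ) / b₂ - 1| ≤ 1 := by
    refine H₂.close.trans ?_
    rw [Real.exp_le_one_iff]
    have := mul_pos hc0 hh2pos
    linarith
  have hxE : |(a₁ : ℝ) / b₁ - 1| ^ (M * T - b) ≤ E := by
    calc |(a₁ : ℝ) / b₁ - 1| ^ (M * T - b) ≤ Real.exp (-(c * h₁)) ^ (M * T - b) :=
          pow_le_pow_left₀ (abs_nonneg _) H₁.close _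
      _ = E := by
          rw [← Real.exp_nat_mul, hE, Nat.cast_sub hbMT]
          congr 1
          push_cast
          ring
  have hyE : |(a₂ : ℝ) / b₂ - 1| ^ T ≤ E := by
    calc |(a₂ : ℝ) / b₂ - 1| ^ T ≤ Real.exp (-(c * h₂)) ^ T :=
          pow_le_pow_left₀ (abs_nonneg _) H₂.close _
      _ ≤ E := by
          rw [← Real.exp_nat_mul, hE]
          apply Real.exp_le_exp.2
          have e1 : c * T * (M * h₁) ≤ c * T * h₂ :=
            mul_le_mul_of_nonneg_left hM1 (by positivity)
          have e2 : 0 ≤ c * h₁ * b := by positivity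
          nlinarith
  have hup := upper_bound N M T hMpos co hcoH hvan _ _ hx1 hy1 b (by nlinarith) E
    (Real.exp_pos _).le hxE hyE
  have hfin : Real.exp (2 * ((1 - δ) * (M * (N - 1 : ℕ) * h₁))) ≤
      Real.exp ((N * M : ℕ) * h₁ + (N - 1 : ℕ) * h₂ + (11 * (N * M) : ℕ) +
        -(c * h₁ * (M * T - b))) := by
    refine hlow.trans ?_
    rw [Real.exp_add, Real.exp_add, Real.exp_add, mul_assoc (Real.exp _ * Real.exp _)]
    refine mul_le_mul (mul_le_mul ?_ ?_ (by positivity) (Real.exp_pos _).le)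
      (hup.trans ?_) (abs_nonneg _) (by positivity)
    · rw [Real.exp_nat_mul]
      exact pow_le_pow_left₀ (by positivity) H₁.hb_le _
    · rw [Real.exp_nat_mul]
      exact pow_le_pow_left₀ (by positivity) H₂.hb_le _
    · exact mul_le_mul_of_nonneg_right (two_pow_le_exp _) (Real.exp_pos _).le
  rw [Real.exp_le_exp] at hfin
  rw [Nat.cast_sub (by omega : 1 ≤ N)] at hfin
  push_cast at hfin
  have hMh : 0 < (M : ℝ) * h₁ := by positivity
  have f1 : ((N : ℝ) - 1) * h₂ ≤ ((N : ℝ) - 1) * ((M + 1) * h₁) :=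
    mul_le_mul_of_nonneg_left hM2.le (by linarith)
  have f2 : (N : ℝ) * h₁ ≤ M / 16 * h₁ := mul_le_mul_of_nonneg_right (by linarith) hh0.le
  have f3 : c * h₁ * b ≤ M * h₁ / 2 := by
    have g1 : c * b ≤ 4 * (M / 8) := mul_le_mul hc4 hb8r (by positivity) (by norm_num)
    have g2 := mul_le_mul_of_nonneg_right g1 hh0.le
    linarith
  have f4 : 11 * ((N : ℝ) * M) ≤ M * h₁ / 16 := by
    have g1 : 300 * (N : ℝ) ≤ h₁ := by linarith
    have g2 := mul_le_mul_of_nonneg_left g1 hMr.le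
    nlinarith
  have f5 : δ * (M * ((N : ℝ) - 1) * h₁) ≤ M * h₁ / 4 := by
    have g0 : δ * (M * (N : ℝ) * h₁) = M * h₁ / 4 := by
      calc δ * (M * (N : ℝ) * h₁) = (δ * N) * (M * h₁) := by ring
        _ = M * h₁ / 4 := by rw [hδN]; ring
    have g1 : 0 < δ * (M * h₁) := by positivity
    linarith
  have f6 : c * h₁ * (M * T) = 4 * (M * h₁) := by rw [← hcT]; ring
  linarith

lemma finite_near {p q : ℕ} (hp : p.Prime) (hq : q.Prime) (hpq : p ≠ q) (T : ℕ) (hT : 1 ≤ T) :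
    {x : ℕ | ∃ a b n m, Near p q (4 / T) (1 / (4 * ((2 * T ^ 2 : ℕ) : ℝ))) (Real.log x)
      a b n m}.Finite := by
  by_contra hinf
  set N := 2 * T ^ 2 with hN
  have hgt : ∀ B : ℝ, ∃ x ∈ {x : ℕ | ∃ a b n m,
      Near p q (4 / T) (1 / (4 * ((N : ℕ) : ℝ))) (Real.log x) a b n m}, B ≤ Real.log x := by
    intro B
    obtain ⟨x, hx, hlt⟩ := Set.Infinite.exists_gt hinf ⌈Real.exp B⌉₊
    refine ⟨x, hx, ?_⟩
    have h1 : Real.exp B ≤ x := (Nat.le_ceil _).trans (by exact_mod_cast hlt.le)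
    rw [← Real.log_exp B]
    exact Real.log_le_log (Real.exp_pos _) h1
  obtain ⟨x₁, ⟨a₁, b₁, n₁, m₁, H₁⟩, hx₁⟩ := hgt (300 * (N : ℝ) ^ 3)
  obtain ⟨x₂, ⟨a₂, b₂, n₂, m₂, H₂⟩, hx₂⟩ := hgt ((16 * N + 1) * Real.log x₁)
  exact no_two hp hq hpq T N hT hN _ _ rfl rfl hx₁ hx₂ H₁ H₂

lemma sum_getD_le (l : List ℕ) (L : ℕ) : ∑ n ∈ Finset.range L, l.getD n 0 ≤ l.sum := by
  induction l generalizing L with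
  | nil => simp
  | cons d l ih =>
    cases L with
    | zero => simp
    | succ L =>
      rw [Finset.sum_range_succ']
      simp only [List.getD_cons_succ, List.getD_cons_zero, List.sum_cons]
      have := ih L
      omega

lemma sum_digit_le {p : ℕ} (hp : 2 ≤ p) (x L : ℕ) :
    ∑ n ∈ Finset.range L, x / p ^ n % p ≤ (Nat.digits p x).sum := by
  refine le_trans (le_of_eq ?_) (sum_getD_le _ L)
  exact Finset.sum_congr rfl fun n _ => (Nat.getD_digits x n hp).symm

lemma mod_eq_sum (p x L : ℕ) :
    x % p ^ L = ∑ n ∈ Finset.range L, p ^ n * (x / p ^ n % p) := by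
  induction L with
  | zero => simp [Nat.mod_one]
  | succ L ih => rw [Finset.sum_range_succ, ← ih, Nat.mod_pow_succ]

lemma mod_le {p : ℕ} (hp : 2 ≤ p) (x L s : ℕ) (hs : (Nat.digits p x).sum ≤ s) (Y : ℝ)
    (hY : 0 ≤ Y) (h : ∀ n < L, x / p ^ n % p ≠ 0 → (p : ℝ) ^ n ≤ Y) :
    ((x % p ^ L : ℕ) : ℝ) ≤ s * Y := by
  rw [mod_eq_sum]
  push_cast
  calc ∑ n ∈ Finset.range L, (p : ℝ) ^ n * ((x / p ^ n % p : ℕ) : ℝ)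
      ≤ ∑ n ∈ Finset.range L, Y * ((x / p ^ n % p : ℕ) : ℝ) := by
        refine Finset.sum_le_sum fun n hn => ?_
        rcases eq_or_ne (x / p ^ n % p) 0 with h0 | h0
        · simp [h0]
        · exact mul_le_mul_of_nonneg_right (h n (Finset.mem_range.1 hn) h0) (by positivity)
    _ = ((∑ n ∈ Finset.range L, x / p ^ n % p : ℕ) : ℝ) * Y := by
        rw [← Finset.mul_sum, mul_comm]; push_cast; rfl
    _ ≤ s * Y := by
        have := (sum_digit_le hp x L).trans hs
        gcongr

/-- Positions of the nonzero digits. -/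
def digPos (p x : ℕ) : Finset ℕ := (Finset.range (x + 1)).filter fun n => x / p ^ n % p ≠ 0

lemma mem_digPos {p : ℕ} (hp : 2 ≤ p) (x n : ℕ) (h : x / p ^ n % p ≠ 0) : n ∈ digPos p x := by
  refine Finset.mem_filter.2 ⟨?_, h⟩
  rw [Finset.mem_range]
  by_contra hn
  apply h
  have h1 : x < p ^ n := by
    have h2 : n < p ^ n := Nat.lt_pow_self (by omega)
    omega
  rw [Nat.div_eq_of_lt h1, Nat.zero_mod]

lemma card_digPos {p : ℕ} (hp : 2 ≤ p) (x s : ℕ) (hs : (Nat.digits p x).sum ≤ s) :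
    (digPos p x).card ≤ s := by
  refine le_trans ?_ ((sum_digit_le hp x (x + 1)).trans hs)
  rw [digPos, Finset.card_filter]
  refine Finset.sum_le_sum fun n _ => ?_
  split_ifs with h
  · omega
  · omega

/-- The scale of parameters. -/
def scaleT : ℕ → ℕ
  | 0 => 8
  | (i + 1) => 64 * scaleT i ^ 2

lemma scaleT_pos (i : ℕ) : 1 ≤ scaleT i := by
  induction i with
  | zero => simp [scaleT]
  | succ i ih => rw [scaleT]; nlinarith

lemma scaleT_mono : Monotone scaleT := by
  refine monotone_nat_of_le_succ fun i => ?_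
  have := scaleT_pos i
  rw [scaleT]
  nlinarith

lemma scale_antitone {i j : ℕ} (h : i ≤ j) : (8 : ℝ) / scaleT j ≤ 8 / scaleT i := by
  have h1 : (0 : ℝ) < scaleT i := by exact_mod_cast scaleT_pos i
  have h2 : (scaleT i : ℝ) ≤ scaleT j := by exact_mod_cast scaleT_mono h
  gcongr

/-- One of the windows contains no nonzero digit. -/
lemma exists_window {p q : ℕ} (hp : 2 ≤ p) (hq : 2 ≤ q) (s t x : ℕ) (h : ℝ) (hh : 0 ≤ h)
    (hs : (Nat.digits p x).sum ≤ s) (ht : (Nat.digits q x).sum ≤ t) :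
    ∃ i < s + t + 1,
      (∀ n, x / p ^ n % p ≠ 0 → (p : ℝ) ^ n < Real.exp ((1 - 8 / scaleT (i + 1)) * h) →
        (p : ℝ) ^ n ≤ Real.exp ((1 - 8 / scaleT i) * h)) ∧
      (∀ n, x / q ^ n % q ≠ 0 → (q : ℝ) ^ n < Real.exp ((1 - 8 / scaleT (i + 1)) * h) →
        (q : ℝ) ^ n ≤ Real.exp ((1 - 8 / scaleT i) * h)) := by
  classical
  by_contra hcon
  push Not at hcon
  let val : ℕ ⊕ ℕ → ℝ := Sum.elim (fun n => (p : ℝ) ^ n) (fun n => (q : ℝ) ^ n)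
  have hex : ∀ i : ℕ, ∃ z : ℕ ⊕ ℕ, i < s + t + 1 → z ∈ (digPos p x).disjSum (digPos q x) ∧
      Real.exp ((1 - 8 / scaleT i) * h) < val z ∧
      val z < Real.exp ((1 - 8 / scaleT (i + 1)) * h) := by
    intro i
    by_cases hi : i < s + t + 1
    · by_cases hP : ∀ n, x / p ^ n % p ≠ 0 →
          (p : ℝ) ^ n < Real.exp ((1 - 8 / scaleT (i + 1)) * h) →
          (p : ℝ) ^ n ≤ Real.exp ((1 - 8 / scaleT i) * h)
      · obtain ⟨n, h1, h2, h3⟩ := hcon i hi hP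
        exact ⟨Sum.inr n, fun _ => ⟨Finset.inr_mem_disjSum.2 (mem_digPos hq x n h1), h3, h2⟩⟩
      · push Not at hP
        obtain ⟨n, h1, h2, h3⟩ := hP
        exact ⟨Sum.inl n, fun _ => ⟨Finset.inl_mem_disjSum.2 (mem_digPos hp x n h1), h3, h2⟩⟩
    · exact ⟨Sum.inl 0, fun hi' => absurd hi' hi⟩
  choose z hz using hex
  have hlt : ∀ i j, i < s + t + 1 → j < s + t + 1 → i < j → z i ≠ z j := by
    intro i j hi hj hij heq
    have h1 := (hz i hi).2.2
    have h2 := (hz j hj).2.1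
    rw [heq] at h1
    have h3 : Real.exp ((1 - 8 / scaleT (i + 1)) * h) ≤ Real.exp ((1 - 8 / scaleT j) * h) := by
      apply Real.exp_le_exp.2
      apply mul_le_mul_of_nonneg_right _ hh
      have := scale_antitone (show i + 1 ≤ j by omega)
      linarith
    linarith
  have hcard := Finset.card_le_card_of_injOn (s := Finset.range (s + t + 1))
    (t := (digPos p x).disjSum (digPos q x)) z
    (fun i hi => (hz i (by simpa using hi)).1)
    (by
      intro i hi j hj hij
      simp only [Finset.coe_range, Set.mem_Iio] at hi hj
      by_contra hne
      rcases lt_or_gt_of_ne hne with h1 | h1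
      · exact hlt i j hi hj h1 hij
      · exact hlt j i hj hi h1 hij.symm)
  rw [Finset.card_range, Finset.card_disjSum] at hcard
  have h1 := card_digPos hp x s hs
  have h2 := card_digPos hq x t ht
  omega

/-- Truncation of `x` above a window without digits. -/
lemma truncate {p : ℕ} (hp : 2 ≤ p) (x s : ℕ) (hs : (Nat.digits p x).sum ≤ s) (Y Z : ℝ)
    (hY : 0 ≤ Y)
    (hw : ∀ n, x / p ^ n % p ≠ 0 → (p : ℝ) ^ n < Z → (p : ℝ) ^ n ≤ Y) :
    ∃ a n : ℕ, p ^ n ∣ a ∧ a ≤ x ∧ Z ≤ (p : ℝ) ^ n ∧ (x : ℝ) - s * Y ≤ a := by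
  obtain ⟨e, he, hediv⟩ := exists_pow_threshold p hp Z
  refine ⟨p ^ e * (x / p ^ e), e, Dvd.intro _ rfl, Nat.mul_div_le x _, he, ?_⟩
  have h1 := mod_le hp x e s hs Y hY (fun n hn h0 => hw n h0 (by
    by_contra hZ
    have := hediv n (not_lt.1 hZ)
    have := (Nat.pow_dvd_pow_iff_le_right (by omega)).1 this
    omega))
  have h2 : ((p ^ e * (x / p ^ e) + x % p ^ e : ℕ) : ℝ) = x := by rw [Nat.div_add_mod]
  rw [Nat.cast_add] at h2
  linarith

lemma near_of_window {p q : ℕ} (hp : 2 ≤ p) (hq : 2 ≤ q) (s t x : ℕ) (hx : 1 ≤ x)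
    (hs : (Nat.digits p x).sum ≤ s) (ht : (Nat.digits q x).sum ≤ t) (hst : 0 < s + t) (c δ h : ℝ)
    (hh : h = Real.log x)
    (hbig : 2 * ((s : ℝ) + t) ≤ Real.exp (c * h))
    (hP : ∀ n, x / p ^ n % p ≠ 0 → (p : ℝ) ^ n < Real.exp ((1 - δ) * h) →
        (p : ℝ) ^ n ≤ Real.exp ((1 - 2 * c) * h))
    (hQ : ∀ n, x / q ^ n % q ≠ 0 → (q : ℝ) ^ n < Real.exp ((1 - δ) * h) →
        (q : ℝ) ^ n ≤ Real.exp ((1 - 2 * c) * h)) :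
    ∃ a b n m, Near p q c δ h a b n m := by
  obtain ⟨a, n, hpa, hax, hpn, hal⟩ := truncate hp x s hs _ _ (Real.exp_pos _).le hP
  obtain ⟨b, m, hqb, hbx, hqm, hbl⟩ := truncate hq x t ht _ _ (Real.exp_pos _).le hQ
  have hxr : (1 : ℝ) ≤ x := by exact_mod_cast hx
  have hexph : Real.exp h = x := by rw [hh, Real.exp_log (by linarith)]
  set ε := Real.exp (-(c * h)) with hε
  have hε0 : 0 < ε := Real.exp_pos _
  have hY : Real.exp ((1 - 2 * c) * h) = x * ε * ε := by
    rw [← hexph, hε, ← Real.exp_add, ← Real.exp_add]; congr 1; ring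
  have hεi : Real.exp (c * h) * ε = 1 := by
    rw [hε, ← Real.exp_add]; simp
  have hst1 : (1 : ℝ) ≤ (s : ℝ) + t := by exact_mod_cast hst
  have hsε : 2 * ((s : ℝ) + t) * ε ≤ 1 := by
    rw [← hεi]
    exact mul_le_mul_of_nonneg_right hbig hε0.le
  have hε1 : ε ≤ 1 := by nlinarith
  rw [hY] at hal hbl
  have hax' : (a : ℝ) ≤ x := by exact_mod_cast hax
  have hbx' : (b : ℝ) ≤ x := by exact_mod_cast hbx
  have hs0 : (0 : ℝ) ≤ s := by positivity
  have ht0 : (0 : ℝ) ≤ t := by positivity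
  -- total error
  have herr : ((s : ℝ) + t) * (x * ε * ε) ≤ x / 2 * ε := by
    have := mul_le_mul_of_nonneg_right hsε (show (0 : ℝ) ≤ x / 2 * ε by positivity)
    nlinarith
  have hxε : x / 2 * ε ≤ (x : ℝ) / 2 := mul_le_of_le_one_right (by positivity) hε1
  have hY0 : 0 ≤ x * ε * ε := by positivity
  have hsY : 0 ≤ (s : ℝ) * (x * ε * ε) := by positivity
  have htY : 0 ≤ (t : ℝ) * (x * ε * ε) := by positivity
  have hahalf : (x : ℝ) / 2 ≤ a := by linarith
  have hbhalf : (x : ℝ) / 2 ≤ b := by linarith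
  have ha0 : (0 : ℝ) < a := by linarith
  have hb0 : (0 : ℝ) < b := by linarith
  refine ⟨a, b, n, m, ⟨by exact_mod_cast ha0, by exact_mod_cast hb0, hpa, hqb, by rwa [hexph],
    by rwa [hexph], hpn, hqm, ?_⟩⟩
  rw [← hε]
  have h1 : (a : ℝ) / b - 1 = (a - b) / b := by field_simp
  rw [h1, abs_div, abs_of_pos hb0, div_le_iff₀ hb0]
  have h2 : |(a : ℝ) - b| ≤ x / 2 * ε := by
    rw [abs_le]; constructor <;> linarith
  calc |(a : ℝ) - b| ≤ x / 2 * ε := h2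
    _ ≤ b * ε := mul_le_mul_of_nonneg_right hbhalf hε0.le
    _ = ε * b := mul_comm _ _

/-- Senge–Straus theorem: for distinct primes `p` and `q` and fixed bounds `s`, `t`, there
are only finitely many natural numbers whose base-`p` digit sum is at most `s` and whose
base-`q` digit sum is at most `t`. -/
theorem senge_straus {p q : ℕ} (hp : p.Prime) (hq : q.Prime) (hpq : p ≠ q)
    (s t : ℕ) (hs : 0 < s) (ht : 0 < t) :
    {x : ℕ | (Nat.digits p x).sum ≤ s ∧ (Nat.digits q x).sum ≤ t}.Finite := by
  let F : ℕ → Set ℕ := fun i => {x : ℕ | ∃ a b n m, Near p q (4 / (scaleT i : ℝ))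
    (1 / (4 * ((2 * scaleT i ^ 2 : ℕ) : ℝ))) (Real.log x) a b n m}
  let G : ℕ → Set ℕ := fun i => {x : ℕ | 1 ≤ x ∧
    Real.exp (4 / (scaleT i : ℝ) * Real.log x) < 2 * ((s : ℝ) + t)}
  have hG : ∀ i, (G i).Finite := by
    intro i
    have hc : (0 : ℝ) < 4 / (scaleT i : ℝ) := by
      have : (0 : ℝ) < scaleT i := by exact_mod_cast scaleT_pos i
      positivity
    refine (Set.finite_Iic ⌈Real.exp (Real.log (2 * ((s : ℝ) + t)) / (4 / (scaleT i : ℝ)))⌉₊).subset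
      fun x hx => ?_
    obtain ⟨hx1, hx2⟩ := hx
    have hxr : (0 : ℝ) < x := by exact_mod_cast hx1
    rw [Set.mem_Iic]
    have h1 := (Real.lt_log_iff_exp_lt (by positivity)).2 hx2
    have h2 : Real.log x ≤ Real.log (2 * ((s : ℝ) + t)) / (4 / (scaleT i : ℝ)) := by
      rw [le_div_iff₀ hc, mul_comm]
      exact h1.le
    have h3 := (Real.log_le_iff_le_exp hxr).1 h2
    exact_mod_cast h3.trans (Nat.le_ceil _)
  have hfin : (({0} : Set ℕ) ∪ ⋃ i ∈ Finset.range (s + t + 1), (F i ∪ G i)).Finite := by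
    refine (Set.finite_singleton 0).union (Set.Finite.biUnion (Finset.finite_toSet _) fun i _ => ?_)
    exact (finite_near hp hq hpq (scaleT i) (scaleT_pos i)).union (hG i)
  refine hfin.subset fun x hx => ?_
  obtain ⟨hxs, hxt⟩ := hx
  rcases Nat.eq_zero_or_pos x with h0 | h0
  · left; exact h0
  right
  have hlog : 0 ≤ Real.log x := Real.log_natCast_nonneg x
  obtain ⟨i, hi, hP, hQ⟩ := exists_window hp.two_le hq.two_le s t x _ hlog hxs hxt
  simp only [Set.mem_iUnion]
  refine ⟨i, Finset.mem_range.2 hi, ?_⟩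
  by_cases hbig : 2 * ((s : ℝ) + t) ≤ Real.exp (4 / (scaleT i : ℝ) * Real.log x)
  · left
    have e1 : (8 : ℝ) / scaleT (i + 1) = 1 / (4 * ((2 * scaleT i ^ 2 : ℕ) : ℝ)) := by
      have : (scaleT i : ℝ) ≠ 0 := by
        have := scaleT_pos i
        exact_mod_cast (by omega : scaleT i ≠ 0)
      rw [scaleT]
      push_cast
      field_simp
      norm_num
    have e2 : (8 : ℝ) / scaleT i = 2 * (4 / scaleT i) := by ring
    rw [e1, e2] at hP hQ
    exact near_of_window hp.two_le hq.two_le s t x h0 hxs hxt (by omega) _ _ _ rfl hbig hP hQ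
  · right
    exact ⟨h0, not_le.1 hbig⟩
end
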